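/- arXiv:2111.11694 — 4 statements merged into one kernel-verified Lean document; each statement's English description precedes it below -/
import Mathlib

section
/- For every integer m ≥ 1 there exist constants C_m > 0 and κ_m ∈ (0,1), depending only on m, such that for all positive integers a₁,…,a_m and all S > 0 and ε > 0 with 0 < ε/(S·(a₁⋯a_m)^{1/2}) ≤ κ_m, one has log N(ε, G_m(a₁,…,a_m; S)) ≤ C_m·(S·(a₁⋯a_m)^{1/2}/ε)^{1/2}·(log(S·(a₁⋯a_m)^{1/2}/ε))^{3(2m−1)/4}, where the net is with respect to the Euclidean norm on ℝ^I; moreover, when m = 1 the bound holds without the logarithmic factor. -/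
open Finset

/-- The map `(L_I)²` : `((L_I)²β)_i = Σ_{j ≤ i} (Π_k (i_k - j_k + 1)) β_j`
(indices in `I = Π_k {0,…,a_k - 1}`, which corresponds to `Π_k {1,…,a_k}`). -/
noncomputable def Lsq (m : ℕ) (a : Fin m → ℕ)
    (β : (∀ k, Fin (a k)) → ℝ) : (∀ k, Fin (a k)) → ℝ :=
  fun i => ∑ j : ∀ k, Fin (a k),
    (if ∀ k, (j k : ℕ) ≤ (i k : ℕ) then
        ∏ k, (((i k : ℕ) : ℝ) - ((j k : ℕ) : ℝ) + 1)
      else 0) * β j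

/-- The class `G_m(a₁,…,a_m; S) = {(L_I)²β : a₁⋯a_m Σ_i |β_i| ≤ S}`. -/
def Gset (m : ℕ) (a : Fin m → ℕ) (S : ℝ) : Set ((∀ k, Fin (a k)) → ℝ) :=
  { θ | ∃ β, (∏ k, (a k : ℝ)) * ∑ i, |β i| ≤ S ∧ θ = Lsq m a β }

/-- Euclidean distance on `ℝ^ι`. -/
noncomputable def eDist {ι : Type*} [Fintype ι] (θ η : ι → ℝ) : ℝ :=
  Real.sqrt (∑ i, (θ i - η i) ^ 2)

/-- `T` is an `ε`-net of `A` with respect to the distance function `dst`. -/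
def IsNet {α : Type*} (dst : α → α → ℝ) (ε : ℝ) (A : Set α) (T : Finset α) : Prop :=
  ∀ a ∈ A, ∃ t ∈ T, dst a t ≤ ε


/-- one-dimensional kernel -/
noncomputable def Fk (i : ℕ) (j : ℕ) : ℝ := max ((i : ℝ) + 1 - j) 0

noncomputable def Ah (F : ℕ → ℝ) (h j : ℕ) : ℝ :=
  (1 - ((j % h : ℕ) : ℝ) / h) * F (j / h * h) + (((j % h : ℕ) : ℝ) / h) * F ((j / h + 1) * h)

noncomputable def Dh (F : ℕ → ℝ) (h b : ℕ) : ℝ :=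
  F ((2 * b + 1) * h) - (F (2 * b * h) + F ((2 * b + 2) * h)) / 2

noncomputable def ch (h j : ℕ) : ℝ := 1 - |((j % (2 * h) : ℕ) : ℝ) - h| / h

lemma ch_abs (h j : ℕ) (hh : 0 < h) : |ch h j| ≤ 1 := by
  unfold ch
  have h1 : j % (2 * h) < 2 * h := Nat.mod_lt _ (by omega)
  have h2 : ((j % (2 * h) : ℕ) : ℝ) < 2 * h := by exact_mod_cast h1
  have h3 : (0 : ℝ) ≤ ((j % (2 * h) : ℕ) : ℝ) := by positivity
  have hp : (0 : ℝ) < h := by exact_mod_cast hh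
  have h4 : |((j % (2 * h) : ℕ) : ℝ) - h| / h ≤ 1 := by
    rw [div_le_one hp, abs_le]; constructor <;> linarith
  have h5 : 0 ≤ |((j % (2 * h) : ℕ) : ℝ) - h| / h := by positivity
  rw [abs_le]; constructor <;> linarith

lemma Ah_step (F : ℕ → ℝ) (h j : ℕ) (hh : 0 < h) :
    Ah F h j = Ah F (2 * h) j + ch h j * Dh F h (j / (2 * h)) := by
  have hp : (0 : ℝ) < h := by exact_mod_cast hh
  obtain ⟨b, r, hr, rfl⟩ : ∃ b r, r < 2 * h ∧ j = r + 2 * h * b :=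
    ⟨j / (2 * h), j % (2 * h), Nat.mod_lt _ (by omega), (Nat.mod_add_div _ _).symm⟩
  have e1 : (r + 2 * h * b) / (2 * h) = b := by
    rw [Nat.add_mul_div_left _ _ (by omega), Nat.div_eq_of_lt hr, zero_add]
  have e2 : (r + 2 * h * b) % (2 * h) = r := by
    rw [Nat.add_mul_mod_self_left, Nat.mod_eq_of_lt hr]
  have e3 : r + 2 * h * b = r + h * (2 * b) := by ring
  unfold Ah Dh ch
  rw [e1, e2, e3, Nat.add_mul_div_left _ _ hh, Nat.add_mul_mod_self_left]
  by_cases c : r < h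
  · rw [Nat.div_eq_of_lt c, Nat.mod_eq_of_lt c]
    have c' : (r : ℝ) < h := by exact_mod_cast c
    rw [abs_of_neg (by linarith)]
    rw [show (0 + 2 * b) * h = 2 * b * h by ring, show (0 + 2 * b + 1) * h = (2 * b + 1) * h by ring,
      show b * (2 * h) = 2 * b * h by ring, show (b + 1) * (2 * h) = (2 * b + 2) * h by ring]
    push_cast
    field_simp
    ring
  · push Not at c
    obtain ⟨q, rfl⟩ := Nat.exists_eq_add_of_le c
    have hq : q < h := by omega
    rw [Nat.add_div_left _ hh, Nat.add_mod_left, Nat.div_eq_of_lt hq, Nat.mod_eq_of_lt hq]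
    rw [abs_of_nonneg (by push_cast; linarith [(Nat.cast_nonneg q : (0:ℝ) ≤ q)])]
    rw [show (Nat.succ 0 + 2 * b) * h = (2 * b + 1) * h by congr 1; omega,
      show (Nat.succ 0 + 2 * b + 1) * h = (2 * b + 2) * h by congr 1; omega,
      show b * (2 * h) = 2 * b * h by ring, show (b + 1) * (2 * h) = (2 * b + 2) * h by ring]
    push_cast
    field_simp
    ring

lemma Dh_bound (i h b : ℕ) :
    (Dh (Fk i) h b) ^ 2 ≤ if i ∈ Ico (2 * b * h) (2 * b * h + 2 * h) then (h : ℝ) ^ 2 else 0 := by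
  have hp : (0 : ℝ) ≤ h := by positivity
  unfold Dh Fk
  push_cast
  split_ifs with c
  · rw [sq_le_sq, abs_of_nonneg hp, abs_le]
    constructor
    all_goals
      rcases max_cases ((i : ℝ) + 1 - (2 * b + 1) * h) 0 with ⟨h1, h1'⟩ | ⟨h1, h1'⟩ <;>
      rcases max_cases ((i : ℝ) + 1 - 2 * b * h) 0 with ⟨h2, h2'⟩ | ⟨h2, h2'⟩ <;>
      rcases max_cases ((i : ℝ) + 1 - (2 * b + 2) * h) 0 with ⟨h3, h3'⟩ | ⟨h3, h3'⟩ <;>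
      rw [h1, h2, h3] <;> linarith
  · simp only [mem_Ico, not_and_or, not_le, not_lt] at c
    apply le_of_eq
    rcases c with c | c
    · have : (i : ℝ) + 1 ≤ 2 * b * h := by exact_mod_cast c
      rw [max_eq_right (by linarith), max_eq_right (by linarith), max_eq_right (by linarith)]
      ring
    · have : (2 : ℝ) * b * h + 2 * h ≤ i := by exact_mod_cast c
      rw [max_eq_left (by linarith), max_eq_left (by linarith), max_eq_left (by linarith)]
      ring

lemma Dh_sum (a h b : ℕ) : ∑ i : Fin a, (Dh (Fk i) h b) ^ 2 ≤ 2 * (h : ℝ) ^ 3 := by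
  rw [Fin.sum_univ_eq_sum_range (fun i => (Dh (Fk i) h b) ^ 2)]
  refine (Finset.sum_le_sum fun i _ => Dh_bound i h b).trans ?_
  rw [← Finset.sum_filter, Finset.sum_const, nsmul_eq_mul]
  have : #(filter (fun i => i ∈ Ico (2 * b * h) (2 * b * h + 2 * h)) (range a)) ≤ 2 * h := by
    refine (card_le_card (t := Ico (2 * b * h) (2 * b * h + 2 * h)) ?_).trans (by simp)
    intro x hx
    exact (mem_filter.1 hx).2
  have : ((#(filter (fun i => i ∈ Ico (2 * b * h) (2 * b * h + 2 * h)) (range a)) : ℕ) : ℝ) ≤ 2 * h := by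
    exact_mod_cast this
  nlinarith [sq_nonneg (h : ℝ)]

lemma one_dim (a : ℕ) (ha : 1 ≤ a) : ∃ (L : ℕ) (c : ℕ → Fin a → ℝ)
    (b : (n : ℕ) → Fin a → Fin (2 ^ n)) (g : (n : ℕ) → Fin (2 ^ n) → Fin a → ℝ),
    (∀ n j, |c n j| ≤ 1) ∧ (∀ n, n ≤ L → ∀ x, ∑ i, (g n x i) ^ 2 ≤ 16 * (a : ℝ) ^ 3 / 8 ^ n) ∧
    ∀ i j : Fin a, Fk i j = ∑ n ∈ range (L + 1), c n j * g n (b n j) i := by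
  set L := Nat.log 2 a + 1 with hL
  have hL1 : a < 2 ^ L := Nat.lt_pow_succ_log_self (by norm_num) a
  have hL2 : 2 ^ L ≤ 2 * a := by
    rw [hL, pow_succ]
    have := Nat.pow_log_le_self 2 (x := a) (by omega)
    omega
  have tele : ∀ F : ℕ → ℝ, ∀ j : ℕ, ∀ n, n ≤ L → Ah F (2 ^ (L - n)) j = Ah F (2 ^ L) j +
      ∑ t ∈ range n, ch (2 ^ (L - (t + 1))) j * Dh F (2 ^ (L - (t + 1))) (j / (2 * 2 ^ (L - (t + 1)))) := by
    intro F j n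
    induction n with
    | zero => intro _; simp
    | succ n ih =>
      intro hn
      rw [sum_range_succ, ← add_assoc, ← ih (by omega), Ah_step _ _ _ (by positivity)]
      congr 2
      rw [← pow_succ']
      congr 1
      omega
  refine ⟨L, fun n j => match n with
      | 0 => 1 - (j : ℝ) / 2 ^ L
      | n + 1 => if n + 1 ≤ L then ch (2 ^ (L - (n + 1))) j else 0,
    fun n j => match n with
      | 0 => ⟨0, by norm_num⟩
      | n + 1 => if hn : n + 1 ≤ L then ⟨j / (2 * 2 ^ (L - (n + 1))), by
          rw [Nat.div_lt_iff_lt_mul (by positivity), ← pow_succ', ← pow_add]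
          refine (j.2.trans hL1).trans_le (Nat.pow_le_pow_right (by norm_num) (by omega))⟩
          else ⟨0, by positivity⟩,
    fun n x i => match n with
      | 0 => Fk i 0
      | n + 1 => Dh (Fk i) (2 ^ (L - (n + 1))) x, ?_, ?_, ?_⟩
  · rintro (_ | n) j
    · have h1 : (j : ℝ) / 2 ^ L ≤ 1 := by
        rw [div_le_one (by positivity)]
        exact_mod_cast (j.2.trans hL1).le
      have h2 : 0 ≤ (j : ℝ) / 2 ^ L := by positivity
      simp only [abs_le]; constructor <;> linarith
    · dsimp only
      split_ifs
      · exact ch_abs _ _ (by positivity)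
      · simp
  · rintro (_ | n) hn x
    · dsimp only
      have : ∀ i : Fin a, (Fk i 0) ^ 2 ≤ (a : ℝ) ^ 2 := by
        intro i
        have : (i : ℝ) + 1 ≤ a := by exact_mod_cast i.2
        unfold Fk
        have h0 : (0 : ℝ) ≤ (i : ℝ) := by positivity
        rw [max_eq_left (by push_cast; linarith)]
        exact pow_le_pow_left₀ (by push_cast; linarith) (by push_cast; linarith) 2
      refine (sum_le_sum fun i _ => this i).trans ?_
      simp
      have : (0 : ℝ) ≤ a := by positivity
      nlinarith [pow_nonneg this 3]
    · dsimp only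
      refine (Dh_sum a _ _).trans ?_
      push_cast
      rw [le_div_iff₀ (by positivity)]
      have e : ((2 : ℝ) ^ (L - (n + 1))) ^ 3 * 8 ^ (n + 1) = (2 ^ L) ^ 3 := by
        rw [show (8 : ℝ) = 2 ^ 3 by norm_num, ← pow_mul, ← pow_mul, ← pow_mul, ← pow_add]
        congr 1; omega
      have h2 : ((2 : ℝ) ^ L) ≤ 2 * a := by exact_mod_cast hL2
      have h3 : ((2 : ℝ) ^ L) ^ 3 ≤ (2 * a) ^ 3 := by gcongr
      rw [mul_assoc, e]
      nlinarith
  · intro i j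
    have := tele (Fk i) j L le_rfl
    rw [sum_range_succ']
    have e1 : Ah (Fk i) (2 ^ (L - L)) j = Fk i j := by simp [Ah, Nat.mod_one]
    have e2 : Ah (Fk i) (2 ^ L) j = (1 - (j : ℝ) / 2 ^ L) * Fk i 0 := by
      unfold Ah
      rw [Nat.div_eq_of_lt (j.2.trans hL1), Nat.mod_eq_of_lt (j.2.trans hL1)]
      have : Fk i ((0 + 1) * 2 ^ L) = 0 := by
        unfold Fk
        apply max_eq_right
        have : (i : ℝ) + 1 ≤ 2 ^ L := by exact_mod_cast (show (i : ℕ) + 1 ≤ 2 ^ L from (Nat.succ_le_of_lt i.2).trans hL1.le)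
        push_cast; linarith
      rw [this]; simp
    rw [e1, e2] at this
    rw [this, add_comm]
    congr 1
    apply sum_congr rfl
    intro n hn
    have hn' : n + 1 ≤ L := by simpa using hn
    simp [hn']

lemma maurey {E : Type*} [NormedAddCommGroup E] [InnerProductSpace ℝ E] {P : Type*} [Fintype P]
    (p : P → ℝ) (hp : ∀ b, 0 ≤ p b) (hs : ∑ b, p b = 1) (y : P → E) (Λ : ℝ)
    (hy : ∀ b, ‖y b‖ ≤ Λ) (k : ℕ) :
    ∃ s : Sym P k, ‖(k : ℝ) • (∑ b, p b • y b) - ((s : Multiset P).map y).sum‖ ^ 2 ≤ k * Λ ^ 2 := by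
  set x := ∑ b, p b • y b with hx
  induction k with
  | zero => exact ⟨Sym.nil, by simp⟩
  | succ k ih =>
    obtain ⟨s, hs'⟩ := ih
    set v := (k : ℝ) • x - ((s : Multiset P).map y).sum with hv
    have key : ∑ b, p b * ‖v + (x - y b)‖ ^ 2 ≤ ∑ b, p b * (‖v‖ ^ 2 + Λ ^ 2) := by
      have h1 : ∀ b, ‖v + (x - y b)‖ ^ 2 = ‖v + x‖ ^ 2 - 2 * inner ℝ (v + x) (y b) + ‖y b‖ ^ 2 := by
        intro b
        rw [← add_sub_assoc, norm_sub_sq_real]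
      have h2' : ∀ z : E, ∑ b, p b * inner ℝ z (y b) = inner ℝ z x := by
        intro z
        rw [hx, inner_sum]
        simp [inner_smul_right]
      have h2 := h2' (v + x)
      have h3 : ∑ b, p b * ‖y b‖ ^ 2 ≤ ∑ b, p b * Λ ^ 2 := by
        apply sum_le_sum; intro b _
        have := hp b
        have := hy b
        gcongr
      have h4 : ∑ b, p b * ‖v + (x - y b)‖ ^ 2 = ‖v + x‖ ^ 2 - 2 * inner ℝ (v + x) x + ∑ b, p b * ‖y b‖ ^ 2 := by
        simp only [h1, mul_add, mul_sub, sum_add_distrib, sum_sub_distrib, ← sum_mul, hs, one_mul]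
        rw [← h2, mul_sum]
        congr 2
        apply sum_congr rfl; intros; ring
      have h5 : ‖v + x‖ ^ 2 - 2 * inner ℝ (v + x) x = ‖v‖ ^ 2 - ‖x‖ ^ 2 := by
        rw [norm_add_sq_real, inner_add_left, real_inner_self_eq_norm_sq]; ring
      rw [h4, h5]
      simp only [← sum_mul, hs, one_mul] at h3 ⊢
      nlinarith [sq_nonneg ‖x‖]
    have : ∃ b, ‖v + (x - y b)‖ ^ 2 ≤ ‖v‖ ^ 2 + Λ ^ 2 := by
      by_contra hcon
      push Not at hcon
      have hne : ∃ b ∈ (univ : Finset P), 0 < p b := by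
        by_contra h0
        push Not at h0
        have : ∑ b, p b ≤ 0 := sum_nonpos h0
        linarith
      obtain ⟨b0, _, hb0⟩ := hne
      have : ∑ b, p b * (‖v‖ ^ 2 + Λ ^ 2) < ∑ b, p b * ‖v + (x - y b)‖ ^ 2 := by
        apply sum_lt_sum
        · intro b _
          exact mul_le_mul_of_nonneg_left (hcon b).le (hp b)
        · exact ⟨b0, mem_univ _, mul_lt_mul_of_pos_left (hcon b0) hb0⟩
      linarith
    obtain ⟨b, hb⟩ := this
    refine ⟨b ::ₛ s, ?_⟩
    have e : ((k + 1 : ℕ) : ℝ) • x - (((b ::ₛ s : Sym P (k+1)) : Multiset P).map y).sum = v + (x - y b) := by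
      rw [Sym.coe_cons, Multiset.map_cons, Multiset.sum_cons, hv]
      push_cast
      rw [add_smul, one_smul]
      abel
    rw [e]
    push_cast
    linarith

lemma maurey_net {E : Type*} [NormedAddCommGroup E] [InnerProductSpace ℝ E] {B : Type*} [Fintype B]
    (G : B → E) (lam R e : ℝ) (hl : 0 ≤ lam) (hR : 0 < R) (hG : ∀ b, ‖G b‖ ≤ lam) (k : ℕ) (he : 0 ≤ e)
    (hk : (k = 0 ∧ 1 ≤ e) ∨ 1 ≤ k * e ^ 2) :
    ∃ T : Finset E, T.Nonempty ∧ #T ≤ (2 * Fintype.card B + k).choose k ∧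
      ∀ γ : B → ℝ, ∑ b, |γ b| ≤ R → ∃ t ∈ T, ‖∑ b, γ b • G b - t‖ ≤ R * lam * e := by
  classical
  let y : Option (B × Bool) → E := fun o => match o with
    | none => 0
    | some (b, true) => R • G b
    | some (b, false) => -(R • G b)
  have hy : ∀ o, ‖y o‖ ≤ R * lam := by
    rintro (_ | ⟨b, _ | _⟩)
    · simp [y]; positivity
    · simp only [y, norm_neg, norm_smul, Real.norm_eq_abs, abs_of_pos hR]
      have := hG b; gcongr
    · simp only [y, norm_smul, Real.norm_eq_abs, abs_of_pos hR]
      have := hG b; gcongr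
  refine ⟨univ.image fun s : Sym (Option (B × Bool)) k => (k : ℝ)⁻¹ • ((s : Multiset _).map y).sum,
    ?_, ?_, ?_⟩
  · exact ⟨_, mem_image_of_mem _ (mem_univ (Sym.replicate k none))⟩
  · refine card_image_le.trans (le_of_eq ?_)
    rw [card_univ, Sym.card_sym_eq_choose]
    congr 1
    simp; omega
  · intro γ hγ
    let p : Option (B × Bool) → ℝ := fun o => match o with
      | none => 1 - (∑ b, |γ b|) / R
      | some (b, true) => (γ b)⁺ / R
      | some (b, false) => (γ b)⁻ / R
    have hp : ∀ o, 0 ≤ p o := by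
      rintro (_ | ⟨b, _ | _⟩)
      · simp only [p, sub_nonneg]; rwa [div_le_one hR]
      · have := negPart_nonneg (γ b); simp only [p]; positivity
      · have := posPart_nonneg (γ b); simp only [p]; positivity
    have hsum : ∑ o, p o = 1 := by
      rw [Fintype.sum_option, Fintype.sum_prod_type]
      simp only [Fintype.sum_bool, p, ← add_div, posPart_add_negPart, ← sum_div]
      ring
    have hx : ∑ o, p o • y o = ∑ b, γ b • G b := by
      rw [Fintype.sum_option, Fintype.sum_prod_type]
      simp only [Fintype.sum_bool, p, y, smul_zero, zero_add, smul_neg, smul_smul]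
      apply sum_congr rfl; intro b _
      rw [← sub_eq_add_neg, ← sub_smul, div_mul_cancel₀ _ hR.ne', div_mul_cancel₀ _ hR.ne',
        posPart_sub_negPart]
    obtain ⟨s, hs⟩ := maurey p hp hsum y (R * lam) hy k
    refine ⟨_, mem_image_of_mem _ (mem_univ s), ?_⟩
    rw [hx] at hs
    rcases hk with ⟨rfl, h1⟩ | hk
    · simp only [CharP.cast_eq_zero, inv_zero, zero_smul, sub_zero]
      rw [← hx]
      calc ‖∑ o, p o • y o‖ ≤ ∑ o, p o * (R * lam) := by
            refine (norm_sum_le _ _).trans (sum_le_sum fun o _ => ?_)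
            rw [norm_smul, Real.norm_eq_abs, abs_of_nonneg (hp o)]
            exact mul_le_mul_of_nonneg_left (hy o) (hp o)
        _ = R * lam := by rw [← sum_mul, hsum, one_mul]
        _ ≤ R * lam * e := le_mul_of_one_le_right (by positivity) h1
    · have hk0 : (0 : ℝ) < k := by
        rcases Nat.eq_zero_or_pos k with h | h
        · subst h; norm_num at hk
        · exact_mod_cast h
      refine (pow_le_pow_iff_left₀ (norm_nonneg _) (by positivity) two_ne_zero).1 ?_
      have e1 : ∑ b, γ b • G b - (k : ℝ)⁻¹ • ((s : Multiset _).map y).sum =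
          (k : ℝ)⁻¹ • ((k : ℝ) • (∑ b, γ b • G b) - ((s : Multiset _).map y).sum) := by
        rw [smul_sub, inv_smul_smul₀ hk0.ne']
      rw [e1, norm_smul, mul_pow, norm_inv, Real.norm_eq_abs, abs_of_pos hk0]
      calc ((k : ℝ)⁻¹) ^ 2 * _ ≤ ((k : ℝ)⁻¹) ^ 2 * (k * (R * lam) ^ 2) := by gcongr
        _ = (k : ℝ)⁻¹ * (R * lam) ^ 2 * 1 := by field_simp
        _ ≤ (k : ℝ)⁻¹ * (R * lam) ^ 2 * (k * e ^ 2) := by gcongr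
        _ = _ := by field_simp

lemma choose_gen (p k : ℕ) (x : ℝ) (hx : 0 < x) :
    Real.log ((p + k).choose k) ≤ (p + k) * x + k * Real.log (1 / x) := by
  have h1 : ((p + k).choose k : ℝ) * x ^ k ≤ (x + 1) ^ (p + k) := by
    rw [add_pow]
    refine le_trans (le_of_eq ?_) (single_le_sum (f := fun i => x ^ i * 1 ^ (p + k - i) * ((p + k).choose i : ℝ)) (fun i _ => by positivity) (mem_range.2 (show k < p + k + 1 by omega)))
    simp; ring
  have hc : (0 : ℝ) < (p + k).choose k := by exact_mod_cast Nat.choose_pos (by omega)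
  have h2 := Real.log_le_log (by positivity) h1
  rw [Real.log_mul hc.ne' (by positivity), Real.log_pow, Real.log_pow] at h2
  have h3 := Real.log_le_sub_one_of_pos (show 0 < x + 1 by linarith)
  have h4 : ((p + k : ℕ) : ℝ) * Real.log (x + 1) ≤ ((p + k : ℕ) : ℝ) * x := by gcongr; linarith
  rw [one_div, Real.log_inv]
  push_cast at h2 h4
  linarith

def dd (n n0 : ℕ) : ℕ := (n - n0) + (n0 - n)

noncomputable def psi (t : ℕ) : ℝ := 15 * (t + 1) / 2 ^ t

lemma level {E : Type*} [NormedAddCommGroup E] [InnerProductSpace ℝ E] {B : Type*} [Fintype B]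
    (G : B → E) (lam R : ℝ) (hl : 0 ≤ lam) (hR : 0 < R) (hG : ∀ b, ‖G b‖ ≤ lam) (n n0 : ℕ)
    (hB : Fintype.card B = 2 ^ n) :
    ∃ T : Finset E, T.Nonempty ∧ Real.log #T ≤ 2 ^ n0 * psi (dd n n0) ∧
      ∀ γ : B → ℝ, ∑ b, |γ b| ≤ R → ∃ t ∈ T, ‖∑ b, γ b • G b - t‖ ≤
        R * lam * (√(8 ^ n) / (4 ^ n0 * 2 ^ (dd n n0))) := by
  have hlog2 : Real.log 2 ≤ 1 := by have := Real.log_two_lt_d9; linarith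
  have hlog0 : 0 ≤ Real.log 2 := Real.log_nonneg (by norm_num)
  suffices H : ∃ k : ℕ, ((k = 0 ∧ 1 ≤ (√(8 ^ n) / (4 ^ n0 * 2 ^ (dd n n0)) : ℝ)) ∨
      1 ≤ k * (√(8 ^ n) / (4 ^ n0 * 2 ^ (dd n n0)) : ℝ) ^ 2) ∧
      Real.log ((2 * 2 ^ n + k).choose k) ≤ 2 ^ n0 * psi (dd n n0) by
    obtain ⟨k, h1, h2⟩ := H
    obtain ⟨T, hT, hc, h⟩ := maurey_net G lam R _ hl hR hG k (by positivity) h1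
    refine ⟨T, hT, le_trans (Real.log_le_log (by exact_mod_cast hT.card_pos) ?_) h2, h⟩
    rw [hB] at hc
    exact_mod_cast hc
  have hsq : (√(8 ^ n) / (4 ^ n0 * 2 ^ (dd n n0)) : ℝ) ^ 2 = 2 ^ (3 * n) / 2 ^ (4 * n0 + 2 * dd n n0) := by
    rw [div_pow, Real.sq_sqrt (by positivity), pow_mul, pow_add, pow_mul, pow_mul]
    norm_num
    rw [mul_pow, ← pow_mul, ← pow_mul, mul_comm n0, mul_comm (dd n n0), pow_mul, pow_mul]
    norm_num
  rcases le_total n0 n with hn | hn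
  · obtain ⟨t, rfl⟩ := Nat.exists_eq_add_of_le hn
    have hd : dd (n0 + t) n0 = t := by unfold dd; omega
    rw [hd] at hsq ⊢
    rcases le_or_gt t n0 with ht | ht
    · obtain ⟨u, rfl⟩ := Nat.exists_eq_add_of_le ht
      refine ⟨2 ^ u, Or.inr ?_, ?_⟩
      · rw [hsq, ← mul_div_assoc, le_div_iff₀ (by positivity), one_mul]
        push_cast
        rw [← pow_add]
        exact pow_le_pow_right₀ (by norm_num) (by omega)
      · have := choose_gen (2 * 2 ^ (t + u + t)) (2 ^ u) (1 / 2 ^ (2 * t)) (by positivity)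
        refine this.trans ?_
        rw [one_div_one_div, Real.log_pow]
        unfold psi
        push_cast
        have h1 : (1 : ℝ) ≤ 2 ^ t := one_le_pow₀ (by norm_num)
        have e : ((2 : ℝ) * 2 ^ (t + u + t) + 2 ^ u) * (1 / 2 ^ (2 * t)) ≤ 3 * 2 ^ u := by
          rw [mul_one_div, div_le_iff₀ (by positivity)]
          have : (2:ℝ) ^ u * 1 ≤ 2 ^ u * 2 ^ (2 * t) := by gcongr; exact one_le_pow₀ (by norm_num)
          have e2 : (2 : ℝ) ^ (t + u + t) = 2 ^ u * 2 ^ (2 * t) := by rw [← pow_add]; congr 1; omega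
          rw [e2]; nlinarith
        have e3 : (2 : ℝ) ^ (t + u) * (15 * (t + 1) / 2 ^ t) = 2 ^ u * (15 * (t + 1)) := by
          rw [pow_add]; field_simp
        rw [e3]
        have : (2 : ℝ) ^ u * (2 * t * Real.log 2) ≤ 2 ^ u * (2 * t * 1) := by gcongr
        have hu : (0 : ℝ) < 2 ^ u := by positivity
        have : (0 : ℝ) ≤ 2 ^ u * t := by positivity
        nlinarith
    · refine ⟨0, Or.inl ⟨rfl, ?_⟩, ?_⟩
      · refine (one_le_sq_iff₀ (by positivity)).1 ?_
        rw [hsq, le_div_iff₀ (by positivity), one_mul]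
        exact pow_le_pow_right₀ (by norm_num) (by omega)
      · simp [psi]; positivity
  · obtain ⟨t, rfl⟩ := Nat.exists_eq_add_of_le hn
    have hd : dd n (n + t) = t := by unfold dd; omega
    rw [hd] at hsq ⊢
    refine ⟨2 ^ (n + 6 * t), Or.inr ?_, ?_⟩
    · rw [hsq, ← mul_div_assoc, le_div_iff₀ (by positivity), one_mul]
      push_cast
      rw [← pow_add]
      exact pow_le_pow_right₀ (by norm_num) (by omega)
    · have := choose_gen (2 ^ (n + 6 * t)) (2 * 2 ^ n) (1 / 2 ^ (6 * t)) (by positivity)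
      rw [add_comm (2 * 2 ^ n), Nat.choose_symm_add]
      refine this.trans ?_
      rw [one_div_one_div, Real.log_pow]
      unfold psi
      push_cast
      have e : ((2 : ℝ) ^ (n + 6 * t) + 2 * 2 ^ n) * (1 / 2 ^ (6 * t)) ≤ 3 * 2 ^ n := by
        rw [mul_one_div, div_le_iff₀ (by positivity)]
        have : (2:ℝ) ^ n * 1 ≤ 2 ^ n * 2 ^ (6 * t) := by gcongr; exact one_le_pow₀ (by norm_num)
        rw [pow_add]; nlinarith
      have e3 : (2 : ℝ) ^ (n + t) * (15 * (t + 1) / 2 ^ t) = 2 ^ n * (15 * (t + 1)) := by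
        rw [pow_add]; field_simp
      rw [e3]
      have : (2 : ℝ) ^ n * (6 * t * Real.log 2) ≤ 2 ^ n * (6 * t * 1) := by gcongr
      have hu : (0 : ℝ) < 2 ^ n := by positivity
      have : (0 : ℝ) ≤ 2 ^ n * t := by positivity
      nlinarith

lemma combine {E : Type*} [NormedAddCommGroup E] {ι : Type*} (s : Finset ι) (T : ι → Finset E)
    (hT : ∀ n ∈ s, (T n).Nonempty) (e : ι → ℝ) :
    ∃ T' : Finset E, T'.Nonempty ∧ Real.log #T' ≤ ∑ n ∈ s, Real.log #(T n) ∧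
      ∀ x : ι → E, (∀ n ∈ s, ∃ t ∈ T n, ‖x n - t‖ ≤ e n) →
        ∃ t ∈ T', ‖∑ n ∈ s, x n - t‖ ≤ ∑ n ∈ s, e n := by
  classical
  induction s using Finset.induction_on with
  | empty => exact ⟨{0}, by simp, by simp, fun x _ => ⟨0, by simp, by simp⟩⟩
  | insert a s ha ih =>
    obtain ⟨T', h1, h2, h3⟩ := ih (fun n hn => hT n (mem_insert_of_mem hn))
    have hTa := hT a (mem_insert_self _ _)
    refine ⟨image₂ (· + ·) (T a) T', hTa.image₂ h1, ?_, ?_⟩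
    · rw [sum_insert ha]
      have c1 : (0 : ℝ) < #(T a) := by exact_mod_cast hTa.card_pos
      have c2 : (0 : ℝ) < #T' := by exact_mod_cast h1.card_pos
      have c3 : (0 : ℝ) < #(image₂ (· + ·) (T a) T') := by exact_mod_cast (hTa.image₂ h1).card_pos
      have : (#(image₂ (· + ·) (T a) T') : ℝ) ≤ #(T a) * #T' := by
        exact_mod_cast card_image₂_le _ _ _
      have := Real.log_le_log c3 this
      rw [Real.log_mul c1.ne' c2.ne'] at this
      linarith
    · intro x hx
      obtain ⟨t, ht, hxt⟩ := h3 x (fun n hn => hx n (mem_insert_of_mem hn))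
      obtain ⟨u, hu, hxu⟩ := hx a (mem_insert_self _ _)
      refine ⟨u + t, mem_image₂_of_mem hu ht, ?_⟩
      rw [sum_insert ha, sum_insert ha, add_sub_add_comm]
      exact (norm_add_le _ _).trans (add_le_add hxu hxt)
lemma psi_nonneg (t : ℕ) : 0 ≤ psi t := by unfold psi; positivity

lemma dd_sum (h : ℕ → ℝ) (h0 : ∀ t, 0 ≤ h t) (hs : Summable h) (n0 : ℕ) (s : Finset ℕ) :
    ∑ q ∈ s, h (dd q n0) ≤ 2 * ∑' t, h t := by
  classical
  rw [← sum_filter_add_sum_filter_not s (fun q => q ≤ n0), two_mul]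
  apply add_le_add
  · rw [← sum_image (f := h) (g := fun q => dd q n0)]
    · exact hs.sum_le_tsum _ (fun t _ => h0 t)
    · intro x hx y hy hxy
      simp [dd] at hx hy hxy
      omega
  · rw [← sum_image (f := h) (g := fun q => dd q n0)]
    · exact hs.sum_le_tsum _ (fun t _ => h0 t)
    · intro x hx y hy hxy
      simp [dd] at hx hy hxy
      omega

lemma psi_summable (p : ℕ) : Summable fun t : ℕ => ((t : ℝ) + 1) ^ p * psi t := by
  have h := summable_pow_mul_geometric_of_norm_lt_one (p + 1) (r := (1 / 2 : ℝ)) (by norm_num)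
  have h2 := ((summable_nat_add_iff 1).2 h).mul_left 30
  refine h2.congr fun t => ?_
  unfold psi
  push_cast
  rw [pow_succ (1 / 2 : ℝ), one_div_pow, pow_succ]
  field_simp
  ring

lemma fiber_card (p q : ℕ) (s : Finset (Fin (p + 1) → ℕ)) :
    #{n ∈ s | ∑ k, n k = q} ≤ (q + 1) ^ p := by
  classical
  have : #(Fintype.piFinset (fun _ : Fin p => range (q + 1))) = (q + 1) ^ p := by simp
  rw [← this]
  refine card_le_card_of_injOn (fun n => fun k => n k.succ) ?_ ?_
  · intro n hn
    simp only [coe_filter, Set.mem_ofPred_eq] at hn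
    rw [mem_coe, Fintype.mem_piFinset]
    intro k
    have := single_le_sum (f := n) (fun i _ => Nat.zero_le _) (mem_univ k.succ)
    simp; omega
  · intro x hx y hy hxy
    simp only [coe_filter, Set.mem_ofPred_eq, Fin.sum_univ_succ] at hx hy
    have h : ∀ k : Fin p, x k.succ = y k.succ := fun k => congrFun hxy k
    have h0 : ∑ k : Fin p, x k.succ = ∑ k : Fin p, y k.succ := sum_congr rfl fun k _ => h k
    funext k
    refine Fin.cases ?_ h k
    omega

lemma sumE (p : ℕ) : ∃ C : ℝ, 0 < C ∧ ∀ (n0 : ℕ) (s : Finset (Fin (p + 1) → ℕ)),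
    ∑ n ∈ s, psi (dd (∑ k, n k) n0) ≤ C * ((n0 : ℝ) + 1) ^ p := by
  classical
  have hs := psi_summable p
  have h0 : ∀ t : ℕ, 0 ≤ ((t : ℝ) + 1) ^ p * psi t := fun t => mul_nonneg (by positivity) (psi_nonneg t)
  have ht : 0 ≤ ∑' t : ℕ, ((t : ℝ) + 1) ^ p * psi t := tsum_nonneg h0
  refine ⟨2 * (∑' t : ℕ, ((t : ℝ) + 1) ^ p * psi t) + 1, by positivity, fun n0 s => ?_⟩
  rw [sum_comp (fun q => psi (dd q n0)) (fun n : Fin (p + 1) → ℕ => ∑ k, n k)]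
  calc _ ≤ ∑ q ∈ s.image (fun n => ∑ k, n k), ((n0 : ℝ) + 1) ^ p *
        ((((dd q n0 : ℕ) : ℝ) + 1) ^ p * psi (dd q n0)) := by
        apply sum_le_sum; intro q _
        rw [nsmul_eq_mul, ← mul_assoc]
        apply mul_le_mul_of_nonneg_right _ (psi_nonneg _)
        have h1 : (#{n ∈ s | ∑ k, n k = q} : ℝ) ≤ ((q : ℝ) + 1) ^ p := by
          exact_mod_cast fiber_card p q s
        refine h1.trans ?_
        rw [← mul_pow]
        have h2 : q ≤ n0 + dd q n0 := by unfold dd; omega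
        have h3 : (q : ℝ) ≤ n0 + (dd q n0 : ℕ) := by exact_mod_cast h2
        apply pow_le_pow_left₀ (by positivity)
        nlinarith [mul_nonneg (Nat.cast_nonneg (α := ℝ) n0) (Nat.cast_nonneg (α := ℝ) (dd q n0))]
    _ ≤ ((n0 : ℝ) + 1) ^ p * (2 * ∑' t : ℕ, ((t : ℝ) + 1) ^ p * psi t) := by
        rw [← mul_sum]
        apply mul_le_mul_of_nonneg_left _ (by positivity)
        exact dd_sum (fun t : ℕ => ((t : ℝ) + 1) ^ p * psi t) h0 hs n0 _
    _ ≤ _ := by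
        rw [mul_comm]
        apply mul_le_mul_of_nonneg_right _ (by positivity)
        linarith

lemma paramF (p : ℕ) (A : ℝ) (hA : 1 ≤ A) : ∃ C : ℝ, 0 < C ∧ ∀ X : ℝ, Real.exp 1 ≤ X →
    ∃ n0 : ℕ, A * ((n0 : ℝ) + 1) ^ p / 4 ^ n0 ≤ 1 / X ∧
      2 ^ n0 * ((n0 : ℝ) + 1) ^ p ≤ C * X ^ ((1 : ℝ) / 2) * Real.log X ^ (3 * (p : ℝ) / 2) := by
  obtain ⟨K, hK1, hK⟩ : ∃ K : ℝ, 1 ≤ K ∧ ∀ n : ℕ, ((n : ℝ) + 1) ^ p ≤ K * 2 ^ n := by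
    have hs := psi_summable p
    have h0 : ∀ t : ℕ, 0 ≤ ((t : ℝ) + 1) ^ p * psi t := fun t => mul_nonneg (by positivity) (psi_nonneg t)
    have ht : 0 ≤ ∑' t : ℕ, ((t : ℝ) + 1) ^ p * psi t := tsum_nonneg h0
    refine ⟨(∑' t : ℕ, ((t : ℝ) + 1) ^ p * psi t) + 1, by linarith, fun n => ?_⟩
    have h1 := hs.le_tsum n (fun t _ => h0 t)
    have h2 : ((n : ℝ) + 1) ^ p / 2 ^ n ≤ ((n : ℝ) + 1) ^ p * psi n := by
      unfold psi
      rw [div_eq_mul_one_div]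
      apply mul_le_mul_of_nonneg_left _ (by positivity)
      gcongr
      linarith [Nat.cast_nonneg (α := ℝ) n]
    rw [← div_le_iff₀ (by positivity)]
    linarith
  have hl2 : 0 < Real.log 2 := Real.log_pos (by norm_num)
  have hAK : 1 ≤ A * K := one_le_mul_of_one_le_of_one_le hA hK1
  set D : ℝ := (Real.log (A * K) + 1) / Real.log 2 + 2 with hD
  have hlAK := Real.log_nonneg hAK
  have hD1 : 1 ≤ D := by
    have : 0 ≤ (Real.log (A * K) + 1) / Real.log 2 := by positivity
    linarith
  refine ⟨2 * √A * D ^ (3 * (p : ℝ) / 2) + 1, by positivity, fun X hX => ?_⟩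
  have hX0 : 0 < X := (Real.exp_pos 1).trans_le hX
  have hX1 : 1 ≤ X := le_trans (by simp) hX
  have hlX : 1 ≤ Real.log X := by rwa [Real.le_log_iff_exp_le hX0]
  have ex : ∃ n0 : ℕ, A * ((n0 : ℝ) + 1) ^ p / 4 ^ n0 ≤ 1 / X := by
    obtain ⟨n, hn⟩ := pow_unbounded_of_one_lt (A * K * X) (show (1 : ℝ) < 2 by norm_num)
    refine ⟨n, ?_⟩
    rw [div_le_div_iff₀ (by positivity) hX0, one_mul, show (4 : ℝ) = 2 * 2 by norm_num, mul_pow]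
    calc A * ((n : ℝ) + 1) ^ p * X ≤ A * (K * 2 ^ n) * X := by gcongr; exact hK n
      _ = (A * K * X) * 2 ^ n := by ring
      _ ≤ _ := by gcongr
  classical
  refine ⟨Nat.find ex, Nat.find_spec ex, ?_⟩
  have hR1 : 1 ≤ X ^ ((1 : ℝ) / 2) := Real.one_le_rpow hX1 (by norm_num)
  have hR2 : 1 ≤ Real.log X ^ (3 * (p : ℝ) / 2) := Real.one_le_rpow hlX (by positivity)
  have hDp : 0 < D ^ (3 * (p : ℝ) / 2) := Real.rpow_pos_of_pos (by linarith) _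
  rcases hn0 : Nat.find ex with _ | n
  · simp only [pow_zero, CharP.cast_eq_zero, zero_add, one_pow, mul_one]
    rw [mul_assoc]
    have h3 := one_le_mul_of_one_le_of_one_le hR1 hR2
    apply one_le_mul_of_one_le_of_one_le _ h3
    have : 0 ≤ 2 * √A * D ^ (3 * (p : ℝ) / 2) := by positivity
    linarith
  · have hmin := Nat.find_min ex (m := n) (by omega)
    rw [not_le, div_lt_div_iff₀ hX0 (by positivity), one_mul] at hmin
    have h1 : (2 : ℝ) ^ n ≤ A * K * X := by
      have : (2 : ℝ) ^ n * 2 ^ n ≤ A * K * X * 2 ^ n := by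
        rw [← mul_pow, show (2 : ℝ) * 2 = 4 by norm_num]
        refine hmin.le.trans ?_
        calc A * ((n : ℝ) + 1) ^ p * X ≤ A * (K * 2 ^ n) * X := by gcongr; exact hK n
          _ = _ := by ring
      exact le_of_mul_le_mul_right this (by positivity)
    have h2 : (n : ℝ) + 2 ≤ D * Real.log X := by
      have := Real.log_le_log (by positivity) h1
      rw [Real.log_pow, Real.log_mul (by positivity) hX0.ne'] at this
      have h3 : (n : ℝ) * Real.log 2 ≤ (Real.log (A * K) + 1) * Real.log X := by nlinarith
      have h4 : (n : ℝ) ≤ (Real.log (A * K) + 1) / Real.log 2 * Real.log X := by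
        rw [div_mul_eq_mul_div, le_div_iff₀ hl2]; exact h3
      rw [hD]; nlinarith
    have h5 : (2 : ℝ) ^ n ≤ √A * X ^ ((1 : ℝ) / 2) * ((n : ℝ) + 2) ^ ((p : ℝ) / 2) := by
      have e : (2 : ℝ) ^ n = √(4 ^ n) := by
        rw [show (4 : ℝ) = 2 ^ 2 by norm_num, ← pow_mul, mul_comm, pow_mul, Real.sqrt_sq (by positivity)]
      rw [e, ← Real.sqrt_eq_rpow]
      have e2 : ((n : ℝ) + 2) ^ ((p : ℝ) / 2) = √(((n : ℝ) + 2) ^ p) := by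
        rw [Real.sqrt_eq_rpow, ← Real.rpow_natCast, ← Real.rpow_mul (by positivity)]
        congr 1; ring
      rw [e2, ← Real.sqrt_mul (by positivity), ← Real.sqrt_mul (by positivity)]
      apply Real.sqrt_le_sqrt
      refine hmin.le.trans ?_
      rw [mul_right_comm]
      gcongr
      norm_num
    have hDl : 0 ≤ D * Real.log X := by positivity
    have e5 : ((n : ℝ) + 2) ^ ((p : ℝ) / 2) * ((n : ℝ) + 2) ^ p = ((n : ℝ) + 2) ^ (3 * (p : ℝ) / 2) := by
      rw [← Real.rpow_natCast, ← Real.rpow_add (by positivity)]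
      congr 1; ring
    calc (2 : ℝ) ^ (n + 1) * (((n + 1 : ℕ) : ℝ) + 1) ^ p
        = 2 * 2 ^ n * ((n : ℝ) + 2) ^ p := by push_cast; rw [pow_succ]; ring
      _ ≤ 2 * (√A * X ^ ((1 : ℝ) / 2) * ((n : ℝ) + 2) ^ ((p : ℝ) / 2)) * ((n : ℝ) + 2) ^ p := by gcongr
      _ = 2 * √A * X ^ ((1 : ℝ) / 2) * ((n : ℝ) + 2) ^ (3 * (p : ℝ) / 2) := by rw [← e5]; ring
      _ ≤ 2 * √A * X ^ ((1 : ℝ) / 2) * (D * Real.log X) ^ (3 * (p : ℝ) / 2) := by gcongr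
      _ = 2 * √A * D ^ (3 * (p : ℝ) / 2) * (X ^ ((1 : ℝ) / 2) * Real.log X ^ (3 * (p : ℝ) / 2)) := by
          rw [Real.mul_rpow (by linarith) (by linarith)]; ring
      _ ≤ (2 * √A * D ^ (3 * (p : ℝ) / 2) + 1) * (X ^ ((1 : ℝ) / 2) * Real.log X ^ (3 * (p : ℝ) / 2)) := by
          gcongr; linarith
      _ = _ := by ring

lemma Lsq_eq (m : ℕ) (a : Fin m → ℕ) (β : (∀ k, Fin (a k)) → ℝ) (i : ∀ k, Fin (a k)) :
    Lsq m a β i = ∑ j : ∀ k, Fin (a k), (∏ k, Fk (i k) (j k)) * β j := by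
  unfold Lsq
  apply sum_congr rfl
  intro j _
  congr 1
  split_ifs with h
  · apply prod_congr rfl
    intro k _
    have : ((j k : ℕ) : ℝ) ≤ (i k : ℕ) := by exact_mod_cast h k
    unfold Fk
    rw [max_eq_left (by linarith)]
    ring
  · push Not at h
    obtain ⟨k, hk⟩ := h
    symm
    apply prod_eq_zero (mem_univ k)
    have : ((i k : ℕ) : ℝ) + 1 ≤ (j k : ℕ) := by exact_mod_cast hk
    unfold Fk
    exact max_eq_right (by linarith)

lemma core (p : ℕ) (C1 : ℝ) (hC1 : ∀ (n0 : ℕ) (s : Finset (Fin (p + 1) → ℕ)),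
    ∑ n ∈ s, psi (dd (∑ k, n k) n0) ≤ C1 * ((n0 : ℝ) + 1) ^ p)
    (a : Fin (p + 1) → ℕ) (ha : ∀ k, 1 ≤ a k) (S : ℝ) (hS : 0 < S) (n0 : ℕ) :
    ∃ T : Finset ((∀ k, Fin (a k)) → ℝ), Real.log #T ≤ 2 ^ n0 * (C1 * ((n0 : ℝ) + 1) ^ p) ∧
      ∀ θ ∈ Gset (p + 1) a S, ∃ t ∈ T, eDist θ t ≤
        S * √(∏ k, (a k : ℝ)) * (4 ^ (p + 1) * (C1 * ((n0 : ℝ) + 1) ^ p) / 4 ^ n0) := by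
  classical
  choose L c b g hc hg hK using fun k => one_dim (a k) (ha k)
  set N : ℝ := ∏ k, (a k : ℝ) with hN
  have hN0 : 0 < N := prod_pos fun k _ => by exact_mod_cast ha k
  let s : Finset (Fin (p + 1) → ℕ) := Fintype.piFinset (fun k => range (L k + 1))
  let G : (n : Fin (p + 1) → ℕ) → (∀ k, Fin (2 ^ n k)) → EuclideanSpace ℝ (∀ k, Fin (a k)) :=
    fun n x => WithLp.toLp 2 (fun i => ∏ k, g k (n k) (x k) (i k))
  let lam : (Fin (p + 1) → ℕ) → ℝ := fun n => 4 ^ (p + 1) * (N * √N) / √(8 ^ (∑ k, n k))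
  have hG : ∀ n ∈ s, ∀ x, ‖G n x‖ ≤ lam n := by
    intro n hn x
    have hn' : ∀ k, n k ≤ L k := by
      intro k
      have := Fintype.mem_piFinset.1 hn k
      simp at this
      omega
    have hl0 : 0 ≤ lam n := by positivity
    refine (pow_le_pow_iff_left₀ (norm_nonneg _) hl0 two_ne_zero).1 ?_
    rw [EuclideanSpace.norm_sq_eq]
    calc ∑ i, ‖(G n x) i‖ ^ 2 = ∑ i : (∀ k, Fin (a k)), ∏ k, (g k (n k) (x k) (i k)) ^ 2 := by
          apply sum_congr rfl; intro i _
          simp only [G, Real.norm_eq_abs, sq_abs, prod_pow]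
      _ = ∏ k, ∑ i, (g k (n k) (x k) i) ^ 2 := by
          rw [Finset.prod_univ_sum, Fintype.piFinset_univ]
      _ ≤ ∏ k, (16 * (a k : ℝ) ^ 3 / 8 ^ n k) := by
          apply prod_le_prod
          · intro k _; positivity
          · intro k _; exact hg k (n k) (hn' k) (x k)
      _ = lam n ^ 2 := by
          rw [prod_div_distrib, prod_mul_distrib, prod_pow, prod_pow_eq_pow_sum, prod_const, ← hN]
          simp only [lam, div_pow, mul_pow, card_univ, Fintype.card_fin]
          have h8 : (0 : ℝ) ≤ 8 ^ (∑ k, n k) := by positivity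
          rw [Real.sq_sqrt h8, Real.sq_sqrt hN0.le, ← pow_mul, mul_comm (p + 1) 2, pow_mul,
            show (4 : ℝ) ^ 2 = 16 by norm_num]
          ring
  have hR : 0 < S / N := by positivity
  have hlev : ∀ n : Fin (p + 1) → ℕ, ∃ T : Finset (EuclideanSpace ℝ (∀ k, Fin (a k))), n ∈ s →
      T.Nonempty ∧ Real.log #T ≤ 2 ^ n0 * psi (dd (∑ k, n k) n0) ∧
      ∀ γ : (∀ k, Fin (2 ^ n k)) → ℝ, ∑ x, |γ x| ≤ S / N → ∃ t ∈ T, ‖∑ x, γ x • G n x - t‖ ≤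
        S / N * lam n * (√(8 ^ (∑ k, n k)) / (4 ^ n0 * 2 ^ (dd (∑ k, n k) n0))) := by
    intro n
    by_cases hn : n ∈ s
    · obtain ⟨T, h⟩ := level (G n) (lam n) (S / N) (by positivity) hR (hG n hn) (∑ k, n k) n0
        (by simp [prod_pow_eq_pow_sum])
      exact ⟨T, fun _ => h⟩
    · exact ⟨∅, fun h => absurd h hn⟩
  choose T hT using hlev
  obtain ⟨T', -, hT'c, hT'⟩ := combine s T (fun n hn => (hT n hn).1)
    (fun n => S / N * lam n * (√(8 ^ (∑ k, n k)) / (4 ^ n0 * 2 ^ (dd (∑ k, n k) n0))))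
  refine ⟨T'.image WithLp.ofLp, ?_, ?_⟩
  · rw [card_image_of_injective _ (WithLp.ofLp_injective 2)]
    refine hT'c.trans ((sum_le_sum fun n hn => (hT n hn).2.1).trans ?_)
    rw [← mul_sum]
    exact mul_le_mul_of_nonneg_left (hC1 n0 s) (by positivity)
  · rintro θ ⟨β, hβ, rfl⟩
    have hβ' : ∑ i, |β i| ≤ S / N := by rw [le_div_iff₀ hN0, mul_comm]; exact hβ
    let bb : (n : Fin (p + 1) → ℕ) → (∀ k, Fin (a k)) → (∀ k, Fin (2 ^ n k)) :=
      fun n j k => b k (n k) (j k)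
    let cc : (n : Fin (p + 1) → ℕ) → (∀ k, Fin (a k)) → ℝ := fun n j => ∏ k, c k (n k) (j k)
    let γ : (n : Fin (p + 1) → ℕ) → (∀ k, Fin (2 ^ n k)) → ℝ :=
      fun n x => ∑ j, if bb n j = x then β j * cc n j else 0
    have hγ : ∀ n, ∑ x, |γ n x| ≤ S / N := by
      intro n
      refine le_trans ?_ hβ'
      calc ∑ x, |γ n x| ≤ ∑ x, ∑ j, |if bb n j = x then β j * cc n j else 0| :=
            sum_le_sum fun x _ => abs_sum_le_sum_abs _ _
        _ = ∑ j, ∑ x, if bb n j = x then |β j * cc n j| else 0 := by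
            rw [sum_comm]
            apply sum_congr rfl; intro j _
            apply sum_congr rfl; intro x _
            split_ifs <;> simp
        _ = ∑ j, |β j * cc n j| := by
            apply sum_congr rfl; intro j _
            simp
        _ ≤ ∑ j, |β j| := by
            apply sum_le_sum; intro j _
            rw [abs_mul]
            apply mul_le_of_le_one_right (abs_nonneg _)
            simp only [cc, abs_prod]
            exact prod_le_one (fun _ _ => abs_nonneg _) (fun k _ => hc k _ _)
    obtain ⟨t, ht, hdist⟩ := hT' (fun n => ∑ x, γ n x • G n x) (fun n hn => (hT n hn).2.2 (γ n) (hγ n))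
    refine ⟨WithLp.ofLp t, mem_image_of_mem _ ht, ?_⟩
    have hdec : ∑ n ∈ s, ∑ x, γ n x • G n x = WithLp.toLp 2 (Lsq (p + 1) a β) := by
      ext i
      change _ = Lsq (p + 1) a β i
      rw [Lsq_eq]
      simp only [WithLp.ofLp_sum, WithLp.ofLp_smul, Finset.sum_apply, Pi.smul_apply, smul_eq_mul]
      have h1 : ∀ n, ∑ x, γ n x * (G n x) i = ∑ j, β j * ∏ k, (c k (n k) (j k) * g k (n k) (b k (n k) (j k)) (i k)) := by
        intro n
        simp only [γ, sum_mul]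
        rw [sum_comm]
        apply sum_congr rfl; intro j _
        simp only [ite_mul, zero_mul, sum_ite_eq, mem_univ, if_true]
        rw [prod_mul_distrib, mul_assoc]
      simp only [h1]
      rw [sum_comm]
      apply sum_congr rfl; intro j _
      rw [← mul_sum, mul_comm]
      congr 1
      simp only [hK]
      rw [Finset.prod_univ_sum]
    have hed : eDist (Lsq (p + 1) a β) (WithLp.ofLp t) = ‖WithLp.toLp 2 (Lsq (p + 1) a β) - t‖ := by
      rw [EuclideanSpace.norm_eq]
      simp [eDist]
    rw [hed, ← hdec]
    refine hdist.trans ?_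
    calc _ ≤ ∑ n ∈ s, S * √N * 4 ^ (p + 1) / 4 ^ n0 * psi (dd (∑ k, n k) n0) := by
          apply sum_le_sum; intro n _
          have h8 : (0 : ℝ) < √(8 ^ (∑ k, n k)) := by positivity
          have e : S / N * lam n * (√(8 ^ (∑ k, n k)) / (4 ^ n0 * 2 ^ (dd (∑ k, n k) n0))) =
              S * √N * 4 ^ (p + 1) / 4 ^ n0 * (1 / 2 ^ (dd (∑ k, n k) n0)) := by
            simp only [lam]
            field_simp
          rw [e]
          apply mul_le_mul_of_nonneg_left _ (by positivity)
          unfold psi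
          gcongr
          linarith [Nat.cast_nonneg (α := ℝ) (dd (∑ k, n k) n0)]
      _ ≤ S * √N * 4 ^ (p + 1) / 4 ^ n0 * (C1 * ((n0 : ℝ) + 1) ^ p) := by
          rw [← mul_sum]
          exact mul_le_mul_of_nonneg_left (hC1 n0 s) (by positivity)
      _ = _ := by ring

lemma main_bound (p : ℕ) : ∃ C : ℝ, 0 < C ∧
      ∀ a : Fin (p + 1) → ℕ, (∀ k, 1 ≤ a k) → ∀ S ε : ℝ, 0 < S → 0 < ε →
        ε / (S * (∏ k, (a k : ℝ)) ^ ((1 : ℝ) / 2)) ≤ Real.exp (-1) →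
        Real.exp 1 ≤ S * (∏ k, (a k : ℝ)) ^ ((1 : ℝ) / 2) / ε ∧
        ∃ T : Finset ((∀ k, Fin (a k)) → ℝ),
          IsNet eDist ε (Gset (p + 1) a S) T ∧
            Real.log T.card ≤
              C * (S * (∏ k, (a k : ℝ)) ^ ((1 : ℝ) / 2) / ε) ^ ((1 : ℝ) / 2) *
                Real.log (S * (∏ k, (a k : ℝ)) ^ ((1 : ℝ) / 2) / ε) ^ (3 * (p : ℝ) / 2) := by
  obtain ⟨C1, hC0, hC1⟩ := sumE p
  obtain ⟨C, hC, hF⟩ := paramF p (4 ^ (p + 1) * C1 + 1) (by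
    have : 0 < 4 ^ (p + 1) * C1 := by positivity
    linarith)
  refine ⟨C1 * C, by positivity, fun a ha S ε hS hε hκ => ?_⟩
  have hN0 : 0 < ∏ k, (a k : ℝ) := prod_pos fun k _ => by exact_mod_cast ha k
  rw [← Real.sqrt_eq_rpow] at *
  set N := ∏ k, (a k : ℝ) with hN
  have hSN : 0 < S * √N := by positivity
  have hX : Real.exp 1 ≤ S * √N / ε := by
    rw [Real.exp_neg, div_le_iff₀ hSN] at hκ
    rw [le_div_iff₀ hε]
    have := mul_le_mul_of_nonneg_left hκ (Real.exp_pos 1).le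
    rwa [← mul_assoc, mul_inv_cancel₀ (Real.exp_pos 1).ne', one_mul] at this
  refine ⟨hX, ?_⟩
  obtain ⟨n0, h1, h2⟩ := hF _ hX
  obtain ⟨T, hT1, hT2⟩ := core p C1 hC1 a ha S hS n0
  refine ⟨T, fun θ hθ => ?_, hT1.trans ?_⟩
  · obtain ⟨t, ht, hd⟩ := hT2 θ hθ
    refine ⟨t, ht, hd.trans ?_⟩
    rw [← hN]
    have h3 : 4 ^ (p + 1) * (C1 * ((n0 : ℝ) + 1) ^ p) / 4 ^ n0 ≤ 1 / (S * √N / ε) := by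
      refine le_trans ?_ h1
      rw [← mul_assoc]
      gcongr
      linarith
    calc S * √N * _ ≤ S * √N * (1 / (S * √N / ε)) := mul_le_mul_of_nonneg_left h3 hSN.le
      _ = ε := by field_simp
  · calc (2 : ℝ) ^ n0 * (C1 * ((n0 : ℝ) + 1) ^ p) = C1 * (2 ^ n0 * ((n0 : ℝ) + 1) ^ p) := by ring
      _ ≤ C1 * _ := mul_le_mul_of_nonneg_left h2 hC0.le
      _ = _ := by ring

/-- Metric entropy bound for `G_m(a₁,…,a_m; S)`:
`log N(ε, G_m) ≤ C_m (S √(a₁⋯a_m)/ε)^{1/2} (log (S √(a₁⋯a_m)/ε))^{3(2m-1)/4}`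
whenever `0 < ε/(S √(a₁⋯a_m)) ≤ κ_m`; when `m = 1` the log factor can be omitted. -/
theorem statement5 (m : ℕ) (hm : 1 ≤ m) :
    ∃ C κ : ℝ, 0 < C ∧ 0 < κ ∧ κ < 1 ∧
      (∀ a : Fin m → ℕ, (∀ k, 1 ≤ a k) → ∀ S ε : ℝ, 0 < S → 0 < ε →
        ε / (S * (∏ k, (a k : ℝ)) ^ ((1 : ℝ) / 2)) ≤ κ →
        ∃ T : Finset ((∀ k, Fin (a k)) → ℝ),
          IsNet eDist ε (Gset m a S) T ∧
            Real.log T.card ≤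
              C * (S * (∏ k, (a k : ℝ)) ^ ((1 : ℝ) / 2) / ε) ^ ((1 : ℝ) / 2) *
                Real.log (S * (∏ k, (a k : ℝ)) ^ ((1 : ℝ) / 2) / ε) ^
                  (3 * (2 * (m : ℝ) - 1) / 4)) ∧
      (m = 1 → ∀ a : Fin m → ℕ, (∀ k, 1 ≤ a k) → ∀ S ε : ℝ, 0 < S → 0 < ε →
        ε / (S * (∏ k, (a k : ℝ)) ^ ((1 : ℝ) / 2)) ≤ κ →
        ∃ T : Finset ((∀ k, Fin (a k)) → ℝ),
          IsNet eDist ε (Gset m a S) T ∧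
            Real.log T.card ≤
              C * (S * (∏ k, (a k : ℝ)) ^ ((1 : ℝ) / 2) / ε) ^ ((1 : ℝ) / 2)) := by
  obtain ⟨p, rfl⟩ : ∃ p, m = p + 1 := ⟨m - 1, by omega⟩
  obtain ⟨C, hC, h⟩ := main_bound p
  refine ⟨C, Real.exp (-1), hC, Real.exp_pos _, by simp, ?_, ?_⟩
  · intro a ha S ε hS hε hκ
    obtain ⟨hX, T, hT, hl⟩ := h a ha S ε hS hε hκ
    refine ⟨T, hT, hl.trans ?_⟩
    have hX0 := (Real.exp_pos 1).trans_le hX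
    have hlX := (Real.le_log_iff_exp_le hX0).2 hX
    apply mul_le_mul_of_nonneg_left _ (by positivity)
    apply Real.rpow_le_rpow_of_exponent_le hlX
    push_cast
    linarith
  · intro hp a ha S ε hS hε hκ
    obtain ⟨hX, T, hT, hl⟩ := h a ha S ε hS hε hκ
    obtain rfl : p = 0 := by omega
    exact ⟨T, hT, by simpa using hl⟩
end

section
/- Let d ≥ 1, fix design points x^(1),…,x^(n) ∈ [0,1]^d, let y ∈ ℝ^n and V > 0. Consider: (a) minimize ‖y − a₀·1 − Mγ‖₂² over a₀ ∈ ℝ and γ ∈ ℝ^J subject to Σ_{(S,l)∈J, l≠0} |γ_{S,l}| ≤ V; and (b) minimize Σ_{i=1}^n (y_i − f_{a₀,{ν_S}}(x^(i)))² over all MARS representations (a₀,{ν_S}) with V({ν_S}) ≤ V. Then: problem (a) attains its minimum; the fitted vector a₀·1 + Mγ is the same for every minimizer of (a); the optimal values of (a) and (b) coincide; for any minimizer (â₀, γ̂) of (a), the MARS representation consisting of â₀ together with, for each nonempty S, the discrete signed measure μ_S placing mass γ̂_{S,l} at the point (u_{l_k}^(k))_{k∈S} for each l ∈ ∏_{k∈S}{0,…,n_k−1},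 is feasible for (b) and attains its minimum; and every minimizer of (b) has fitted values f(x^(i)) = â₀ + (Mγ̂)_i for all i. -/
open Finset MeasureTheory
open scoped ENNReal

/-- A MARS representation: a constant `a0` together with, for each (nonempty) subset `S`
of coordinates, a finite signed Borel measure on `ℝ^S` concentrated on `Π_{j∈S} [0,1)`. -/
structure MarsRep (d : ℕ) where
  a0 : ℝ
  ν : ∀ S : Finset (Fin d), SignedMeasure ({j // j ∈ S} → ℝ)
  conc : ∀ S : Finset (Fin d),
    (ν S).totalVariation {t : {j // j ∈ S} → ℝ | ∀ j, 0 ≤ t j ∧ t j < 1}ᶜ = 0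

/-- Integration of a real function against a finite signed measure. -/
noncomputable def sIntegral {α : Type*} [MeasurableSpace α]
    (ν : SignedMeasure α) (f : α → ℝ) : ℝ :=
  (∫ t, f t ∂ν.toJordanDecomposition.posPart) -
    (∫ t, f t ∂ν.toJordanDecomposition.negPart)

/-- The function `f_{a₀,{ν_S}}` associated with a MARS representation. -/
noncomputable def marsFun {d : ℕ} (R : MarsRep d) (x : Fin d → ℝ) : ℝ :=
  R.a0 + ∑ S : Finset (Fin d),
    if S.Nonempty then
      sIntegral (R.ν S) fun t => ∏ j : {j // j ∈ S}, max (x j.1 - t j) 0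
    else 0

/-- The variation `V({ν_S}) = Σ_{∅ ≠ S} |ν_S|(Π_{j∈S}[0,1) \ {0})` of a MARS
representation. -/
noncomputable def marsVar {d : ℕ} (R : MarsRep d) : ℝ≥0∞ :=
  ∑ S : Finset (Fin d),
    if S.Nonempty then
      (R.ν S).totalVariation
        ({t : {j // j ∈ S} → ℝ | ∀ j, 0 ≤ t j ∧ t j < 1} \ {fun _ => 0})
    else 0

/-- The parameter space of the finite-dimensional LASSO problem: an intercept `a₀`
together with, for each subset `S` of coordinates, coefficients indexed by
`l ∈ Π_{k∈S} {0,…,n_k−1}`. -/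
abbrev LassoParam (d : ℕ) (m : Fin d → ℕ) :=
  ℝ × ∀ S : Finset (Fin d), (∀ j : {j // j ∈ S}, Fin (m j.1)) → ℝ

/-- The fitted value `a₀ + (Mγ)_i` of the finite-dimensional LASSO model at the `i`-th
design point, where `M_{i,(S,l)} = Π_{k∈S} (x_k^{(i)} − u_{l_k}^{(k)})₊`. -/
noncomputable def fitA (d nn : ℕ) (x : Fin nn → Fin d → ℝ) (m : Fin d → ℕ)
    (u : ∀ k, Fin (m k + 1) → ℝ) (p : LassoParam d m) (i : Fin nn) : ℝ :=
  p.1 + ∑ S : Finset (Fin d),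
    if S.Nonempty then
      ∑ l : ∀ j : {j // j ∈ S}, Fin (m j.1),
        p.2 S l * ∏ j : {j // j ∈ S}, max (x i j.1 - u j.1 ((l j).castSucc)) 0
    else 0

/-- The ℓ¹ penalty `Σ_{(S,l), l ≠ 0} |γ_{S,l}|` of the LASSO problem. -/
noncomputable def penA (d : ℕ) (m : Fin d → ℕ) (p : LassoParam d m) : ℝ :=
  ∑ S : Finset (Fin d),
    if S.Nonempty then
      ∑ l : ∀ j : {j // j ∈ S}, Fin (m j.1),
        if ∀ j, (l j : ℕ) = 0 then 0 else |p.2 S l|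
    else 0

/-- The least-squares objective of the finite-dimensional LASSO problem (a). -/
noncomputable def objA (d nn : ℕ) (x : Fin nn → Fin d → ℝ) (y : Fin nn → ℝ)
    (m : Fin d → ℕ) (u : ∀ k, Fin (m k + 1) → ℝ) (p : LassoParam d m) : ℝ :=
  ∑ i, (y i - fitA d nn x m u p i) ^ 2

/-- The least-squares objective of the infinite-dimensional problem (b). -/
noncomputable def objB (d nn : ℕ) (x : Fin nn → Fin d → ℝ) (y : Fin nn → ℝ)
    (R : MarsRep d) : ℝ :=
  ∑ i, (y i - marsFun R (x i)) ^ 2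

theorem hat_exists (m : ℕ) (u : Fin (m + 1) → ℝ) (hu : StrictMono u) (h0 : u 0 = 0)
    (h1 : u (Fin.last m) = 1) :
    ∃ φ : Fin m → ℝ → ℝ, (∀ l, Measurable (φ l)) ∧ (∀ l t, 0 ≤ φ l t) ∧
      (∀ t, 0 ≤ t → t < 1 → ∑ l, φ l t ≤ 1) ∧
      (∀ l : Fin m, (l : ℕ) ≠ 0 → φ l 0 = 0) ∧
      (∀ t, 0 ≤ t → t < 1 → ∀ r ∈ Set.range u,
        max (r - t) 0 = ∑ l, φ l t * max (r - u l.castSucc) 0) := by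
  classical
  let I : Fin m → ℝ → ℝ := fun j => Set.indicator (Set.Ico (u j.castSucc) (u j.succ)) 1
  let lam : Fin m → ℝ → ℝ := fun j t => (t - u j.castSucc) / (u j.succ - u j.castSucc)
  let ψ : Fin (m + 1) → ℝ → ℝ := fun l t => ∑ j : Fin m, I j t *
    ((if l = j.castSucc then 1 - lam j t else 0) + (if l = j.succ then lam j t else 0))
  have hpos : ∀ j : Fin m, 0 < u j.succ - u j.castSucc := fun j =>
    sub_pos.2 (hu Fin.castSucc_lt_succ)
  have hpiece : ∀ t, 0 ≤ t → t < 1 → ∃ j : Fin m, u j.castSucc ≤ t ∧ t < u j.succ := by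
    intro t ht0 ht1
    by_contra! hcon
    have : ∀ l : Fin (m + 1), u l ≤ t := by
      intro l
      induction l using Fin.induction with
      | zero => rw [h0]; exact ht0
      | succ i ih => exact hcon i ih
    have := this (Fin.last m)
    linarith
  have hcollapse : ∀ (j : Fin m) t, u j.castSucc ≤ t → t < u j.succ → ∀ l, ψ l t =
      ((if l = j.castSucc then 1 - lam j t else 0) + (if l = j.succ then lam j t else 0)) := by
    intro j t hj1 hj2 l
    have : ∀ j' : Fin m, j' ≠ j → I j' t = 0 := by
      intro j' hne
      apply Set.indicator_of_notMem
      rintro ⟨ha, hb⟩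
      rcases lt_or_gt_of_ne hne with h | h
      · have : u j'.succ ≤ u j.castSucc := hu.monotone (by
          rw [Fin.le_def]; simp only [Fin.val_succ, Fin.val_castSucc]; exact h)
        linarith
      · have : u j.succ ≤ u j'.castSucc := hu.monotone (by
          rw [Fin.le_def]; simp only [Fin.val_succ, Fin.val_castSucc]; exact h)
        linarith
    have hj : I j t = 1 := Set.indicator_of_mem (show t ∈ Set.Ico _ _ from ⟨hj1, hj2⟩) _
    show ∑ j : Fin m, I j t * _ = _
    rw [Finset.sum_eq_single j, hj, one_mul]
    · intro b _ hb; rw [this b hb, zero_mul]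
    · intro h; exact absurd (Finset.mem_univ _) h
  have hnn : ∀ l t, 0 ≤ ψ l t := by
    intro l t
    refine Finset.sum_nonneg fun j _ => ?_
    by_cases h : t ∈ Set.Ico (u j.castSucc) (u j.succ)
    · have hj : I j t = 1 := Set.indicator_of_mem h _
      have ha : 0 ≤ lam j t := div_nonneg (sub_nonneg.2 h.1) (hpos j).le
      have hb : lam j t ≤ 1 := (div_le_one (hpos j)).2 (by linarith [h.2])
      rw [hj, one_mul]
      apply add_nonneg <;> split_ifs <;> linarith
    · have hj : I j t = 0 := Set.indicator_of_notMem h _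
      rw [hj, zero_mul]
  have hsum : ∀ (j : Fin m) t (g : Fin (m + 1) → ℝ), u j.castSucc ≤ t → t < u j.succ →
      ∑ l, ψ l t * g l = (1 - lam j t) * g j.castSucc + lam j t * g j.succ := by
    intro j t g hj1 hj2
    simp_rw [hcollapse j t hj1 hj2, add_mul, Finset.sum_add_distrib, ite_mul, zero_mul]
    simp
  refine ⟨fun l => ψ l.castSucc, ?_, fun l t => hnn _ _, ?_, ?_, ?_⟩
  · intro l
    refine Finset.measurable_sum _ fun j _ => ?_
    refine Measurable.mul ((measurable_const).indicator measurableSet_Ico) ?_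
    refine Measurable.add ?_ ?_
    · split_ifs <;> fun_prop
    · split_ifs <;> fun_prop
  · intro t ht0 ht1
    obtain ⟨j, hj1, hj2⟩ := hpiece t ht0 ht1
    have := hsum j t (fun _ => 1) hj1 hj2
    rw [Fin.sum_univ_castSucc] at this
    simp only [mul_one] at this
    have := hnn (Fin.last m) t
    linarith
  · intro l hl
    obtain ⟨j, hj1, hj2⟩ := hpiece 0 le_rfl one_pos
    have hj0 : (j : ℕ) = 0 := by
      by_contra h
      have : u 0 < u j.castSucc := hu (by
        rw [Fin.lt_def]; simp only [Fin.val_castSucc, Fin.val_zero]; omega)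
      linarith
    have hu0 : u j.castSucc = 0 := by
      rw [← h0]; congr 1; ext; simp [hj0]
    have hlam : lam j 0 = 0 := by simp [lam, hu0]
    show ψ _ _ = 0
    rw [hcollapse j 0 hj1 hj2, hlam, if_neg]
    · simp
    · intro h
      apply hl
      have := congrArg Fin.val h
      simpa [hj0] using this
  · rintro t ht0 ht1 _ ⟨a, rfl⟩
    obtain ⟨j, hj1, hj2⟩ := hpiece t ht0 ht1
    have := hsum j t (fun l => max (u a - u l) 0) hj1 hj2
    rw [Fin.sum_univ_castSucc] at this
    have hz : max (u a - u (Fin.last m)) 0 = 0 :=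
      max_eq_right (sub_nonpos.2 (hu.monotone (Fin.le_last a)))
    rw [hz, mul_zero, add_zero] at this
    show _ = ∑ l : Fin m, ψ l.castSucc t * _
    rw [this]
    have hl : lam j t * (u j.succ - u j.castSucc) = t - u j.castSucc :=
      div_mul_cancel₀ _ (hpos j).ne'
    rcases le_or_gt a j.castSucc with h | h
    · have e1 : u a ≤ u j.castSucc := hu.monotone h
      rw [max_eq_right (by linarith), max_eq_right (by linarith),
        max_eq_right (by linarith [hpos j])]
      ring
    · have e1 : u j.succ ≤ u a := hu.monotone (by
        rw [Fin.le_def]; rw [Fin.lt_def] at h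
        simp only [Fin.val_succ, Fin.val_castSucc] at h ⊢; omega)
      rw [max_eq_left (by linarith), max_eq_left (by linarith [hpos j]),
        max_eq_left (by linarith)]
      linarith

theorem disc_exists {ι α : Type*} [Fintype ι] [MeasurableSpace α] [MeasurableSingletonClass α]
    (pt : ι → α) (hpt : Function.Injective pt) (c : ι → ℝ) :
    ∃ ν : SignedMeasure α,
      (∀ E, MeasurableSet E → ν E = ∑ l, Set.indicator E (fun _ => (1 : ℝ)) (pt l) * c l) ∧
      (∀ E, MeasurableSet E → ν.totalVariation E =
        ENNReal.ofReal (∑ l, Set.indicator E (fun _ => (1 : ℝ)) (pt l) * |c l|)) ∧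
      (∀ f : α → ℝ, sIntegral ν f = ∑ l, c l * f (pt l)) := by
  classical
  let K : (ι → ℝ) → Measure α := fun c => ∑ l, ENNReal.ofReal (c l) • Measure.dirac (pt l)
  have hK : ∀ (c : ι → ℝ) E, MeasurableSet E → K c E =
      ENNReal.ofReal (∑ l, Set.indicator E (fun _ => (1 : ℝ)) (pt l) * max (c l) 0) := by
    intro c E hE
    rw [ENNReal.ofReal_sum_of_nonneg]
    · simp only [K, Measure.coe_finsetSum, Finset.sum_apply, Measure.smul_apply, smul_eq_mul]
      refine Finset.sum_congr rfl fun l _ => ?_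
      rw [Measure.dirac_apply' _ hE]
      by_cases h : pt l ∈ E
      · rw [Set.indicator_of_mem h, Set.indicator_of_mem h, Pi.one_apply, mul_one, one_mul]
        rcases le_total (c l) 0 with hc | hc
        · rw [max_eq_right hc, ENNReal.ofReal_of_nonpos hc, ENNReal.ofReal_zero]
        · rw [max_eq_left hc]
      · simp [h]
    · intro l _
      exact mul_nonneg (Set.indicator_nonneg (fun _ _ => zero_le_one) _) (le_max_right _ _)
  have hfin : ∀ c, IsFiniteMeasure (K c) := by
    intro c
    refine ⟨?_⟩
    rw [hK c _ MeasurableSet.univ]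
    exact ENNReal.ofReal_lt_top
  have := hfin c
  have := hfin (-c)
  have hA : MeasurableSet (pt '' {l | 0 < c l}) := (Set.toFinite _).measurableSet
  have hsing : K c ⟂ₘ K (-c) := by
    refine ⟨(pt '' {l | 0 < c l})ᶜ, hA.compl, ?_, ?_⟩
    · rw [hK _ _ hA.compl, Finset.sum_eq_zero, ENNReal.ofReal_zero]
      intro l _
      by_cases h : 0 < c l
      · rw [Set.indicator_of_notMem, zero_mul]
        exact fun hh => hh ⟨l, h, rfl⟩
      · rw [max_eq_right (not_lt.1 h), mul_zero]
    · rw [compl_compl, hK _ _ hA, Finset.sum_eq_zero, ENNReal.ofReal_zero]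
      intro l _
      by_cases h : 0 < c l
      · rw [max_eq_right (by simpa using h.le), mul_zero]
      · rw [Set.indicator_of_notMem, zero_mul]
        rintro ⟨l', h', e⟩
        exact h (hpt e ▸ h')
  have hreal : ∀ (c : ι → ℝ) E, MeasurableSet E → (K c).real E =
      (∑ l, Set.indicator E (fun _ => (1 : ℝ)) (pt l) * max (c l) 0) := by
    intro c E hE
    rw [measureReal_def, hK c E hE, ENNReal.toReal_ofReal]
    exact Finset.sum_nonneg fun l _ =>
      mul_nonneg (Set.indicator_nonneg (fun _ _ => zero_le_one) _) (le_max_right _ _)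
  have hint : ∀ (c : ι → ℝ) (f : α → ℝ), ∫ t, f t ∂(K c) = ∑ l, max (c l) 0 * f (pt l) := by
    intro c f
    rw [integral_finsetSum_measure]
    · refine Finset.sum_congr rfl fun l _ => ?_
      rw [integral_smul_measure, integral_dirac]
      simp [ENNReal.toReal_ofReal']
    · intro l _
      exact (integrable_dirac (by simp)).smul_measure ENNReal.ofReal_ne_top
  have hmax : ∀ a : ℝ, max a 0 - max (-a) 0 = a := by
    intro a; rcases le_total a 0 with h | h
    · rw [max_eq_right h, max_eq_left (by linarith)]; ring
    · rw [max_eq_left h, max_eq_right (by linarith)]; ring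
  have habs : ∀ a : ℝ, max a 0 + max (-a) 0 = |a| := by
    intro a; rcases le_total a 0 with h | h
    · rw [max_eq_right h, max_eq_left (by linarith), abs_of_nonpos h]; ring
    · rw [max_eq_left h, max_eq_right (by linarith), abs_of_nonneg h]; ring
  let j : JordanDecomposition α := ⟨K c, K (-c), hsing⟩
  have hj := JordanDecomposition.toJordanDecomposition_toSignedMeasure j
  refine ⟨j.toSignedMeasure, ?_, ?_, ?_⟩
  · intro E hE
    rw [JordanDecomposition.toSignedMeasure, Measure.toSignedMeasure_sub_apply hE]
    show (K c).real E - (K (-c)).real E = _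
    rw [hreal _ _ hE, hreal _ _ hE, ← Finset.sum_sub_distrib]
    refine Finset.sum_congr rfl fun l _ => ?_
    rw [← mul_sub, Pi.neg_apply, hmax]
  · intro E hE
    rw [SignedMeasure.totalVariation, hj]
    show K c E + K (-c) E = _
    rw [hK _ _ hE, hK _ _ hE, ← ENNReal.ofReal_add, ← Finset.sum_add_distrib]
    · congr 1
      refine Finset.sum_congr rfl fun l _ => ?_
      rw [← mul_add, Pi.neg_apply, habs]
    all_goals exact Finset.sum_nonneg fun l _ =>
      mul_nonneg (Set.indicator_nonneg (fun _ _ => zero_le_one) _) (le_max_right _ _)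
  · intro f
    rw [sIntegral, hj]
    show ∫ t, f t ∂(K c) - ∫ t, f t ∂(K (-c)) = _
    rw [hint, hint, ← Finset.sum_sub_distrib]
    refine Finset.sum_congr rfl fun l _ => ?_
    rw [← sub_mul, Pi.neg_apply, hmax]

theorem proj_measure {T : Type*} [Fintype T] [DecidableEq T] (m : T → ℕ)
    (u : ∀ k, Fin (m k + 1) → ℝ) (φ : ∀ k, Fin (m k) → ℝ → ℝ)
    (hφm : ∀ k l, Measurable (φ k l)) (hφ0 : ∀ k l t, 0 ≤ φ k l t)
    (hφ1 : ∀ k t, 0 ≤ t → t < 1 → ∑ l, φ k l t ≤ 1)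
    (hφz : ∀ k, ∀ l : Fin (m k), (l : ℕ) ≠ 0 → φ k l 0 = 0)
    (hφr : ∀ k t, 0 ≤ t → t < 1 → ∀ r ∈ Set.range (u k),
        max (r - t) 0 = ∑ l, φ k l t * max (r - u k l.castSucc) 0)
    (μ : Measure (T → ℝ)) [IsFiniteMeasure μ]
    (hμ : μ {t : T → ℝ | ∀ j, 0 ≤ t j ∧ t j < 1}ᶜ = 0) :
    (∑ l : ∀ k, Fin (m k), if ∀ j, (l j : ℕ) = 0 then 0 else ∫ t, ∏ j, φ j (l j) (t j) ∂μ) ≤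
      μ.real ({t : T → ℝ | ∀ j, 0 ≤ t j ∧ t j < 1} \ {fun _ => 0}) ∧
    ∀ x : T → ℝ, (∀ k, x k ∈ Set.range (u k)) →
      ∫ t, ∏ j, max (x j - t j) 0 ∂μ =
        ∑ l : ∀ k, Fin (m k), (∫ t, ∏ j, φ j (l j) (t j) ∂μ) *
          ∏ j, max (x j - u j (l j).castSucc) 0 := by
  classical
  have hcube : ∀ᵐ t ∂μ, ∀ j, 0 ≤ t j ∧ t j < 1 := by
    rw [ae_iff]; exact hμ
  have hcm : MeasurableSet {t : T → ℝ | ∀ j, 0 ≤ t j ∧ t j < 1} := by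
    have : {t : T → ℝ | ∀ j, 0 ≤ t j ∧ t j < 1} = Set.univ.pi fun _ => Set.Ico 0 1 := by
      ext t; simp [Set.mem_pi]
    rw [this]
    exact MeasurableSet.univ_pi fun _ => measurableSet_Ico
  have hAm := hcm.diff (measurableSet_singleton (fun _ : T => (0 : ℝ)))
  have hnn : ∀ (l : ∀ k, Fin (m k)) (t : T → ℝ), 0 ≤ ∏ j, φ j (l j) (t j) := fun l t =>
    Finset.prod_nonneg fun j _ => hφ0 _ _ _
  have hle1 : ∀ t : T → ℝ, (∀ j, 0 ≤ t j ∧ t j < 1) →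
      ∑ l : ∀ k, Fin (m k), ∏ j, φ j (l j) (t j) ≤ 1 := by
    intro t ht
    rw [← Fintype.piFinset_univ, ← Finset.prod_univ_sum (fun _ => Finset.univ)
      (fun j l => φ j l (t j))]
    exact Finset.prod_le_one (fun j _ => Finset.sum_nonneg fun _ _ => hφ0 _ _ _)
      (fun j _ => hφ1 j _ (ht j).1 (ht j).2)
  have hint : ∀ l : ∀ k, Fin (m k), Integrable (fun t : T → ℝ => ∏ j, φ j (l j) (t j)) μ := by
    intro l
    refine Integrable.of_bound (C := 1) ?_ ?_
    · exact (Finset.measurable_prod _ fun j _ =>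
        (hφm j (l j)).comp (measurable_pi_apply j)).aestronglyMeasurable
    · filter_upwards [hcube] with t ht
      rw [Real.norm_of_nonneg (hnn l t)]
      exact (Finset.single_le_sum (f := fun l : ∀ k, Fin (m k) => ∏ j, φ j (l j) (t j))
        (fun l _ => hnn l t) (Finset.mem_univ l)).trans (hle1 t ht)
  constructor
  · rw [← integral_indicator_one hAm]
    have : ∀ l : ∀ k, Fin (m k), (if ∀ j, (l j : ℕ) = 0 then 0 else
        ∫ t, ∏ j, φ j (l j) (t j) ∂μ) = ∫ t, (if ∀ j, (l j : ℕ) = 0 then 0 else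
        ∏ j, φ j (l j) (t j)) ∂μ := by
      intro l; split_ifs <;> simp
    have hint' : ∀ l : ∀ k, Fin (m k), Integrable (fun t : T → ℝ =>
        if ∀ j, (l j : ℕ) = 0 then 0 else ∏ j, φ j (l j) (t j)) μ := by
      intro l
      by_cases h : ∀ j, (l j : ℕ) = 0
      · simp [h]
      · simpa only [if_neg h] using hint l
    simp_rw [this]
    rw [← integral_finsetSum _ fun l _ => hint' l]
    refine integral_mono_ae (integrable_finsetSum _ fun l _ => hint' l)
      ((integrable_const (1 : ℝ)).indicator hAm) ?_
    filter_upwards [hcube] with t ht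
    by_cases h0 : t = fun _ => 0
    · rw [Finset.sum_eq_zero]
      · exact Set.indicator_nonneg (fun _ _ => zero_le_one) _
      · intro l _
        split_ifs with h
        · rfl
        · push Not at h
          obtain ⟨j, hj⟩ := h
          refine Finset.prod_eq_zero (Finset.mem_univ j) ?_
          rw [h0]; exact hφz j _ hj
    · rw [Set.indicator_of_mem (show t ∈ {t : T → ℝ | ∀ j, 0 ≤ t j ∧ t j < 1} \ {fun _ => 0} from ⟨ht, h0⟩)]
      refine le_trans (Finset.sum_le_sum fun l _ => ?_) (hle1 t ht)
      split_ifs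
      · exact hnn l t
      · exact le_rfl
  · intro x hx
    simp_rw [← integral_mul_const]
    rw [← integral_finsetSum _ fun l _ => (hint l).mul_const _]
    refine integral_congr_ae ?_
    filter_upwards [hcube] with t ht
    rw [Finset.prod_congr rfl fun j _ => hφr j (t j) (ht j).1 (ht j).2 (x j) (hx j),
      Finset.prod_univ_sum, Fintype.piFinset_univ]
    exact Finset.sum_congr rfl fun l _ => Finset.prod_mul_distrib

theorem proj_signed {T : Type*} [Fintype T] [DecidableEq T] (m : T → ℕ)
    (u : ∀ k, Fin (m k + 1) → ℝ) (hu : ∀ k, StrictMono (u k)) (h0 : ∀ k, u k 0 = 0)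
    (h1 : ∀ k, u k (Fin.last (m k)) = 1) (ν : SignedMeasure (T → ℝ))
    (hν : ν.totalVariation {t : T → ℝ | ∀ j, 0 ≤ t j ∧ t j < 1}ᶜ = 0) :
    ∃ γ : (∀ k, Fin (m k)) → ℝ,
      (∑ l : ∀ k, Fin (m k), if ∀ j, (l j : ℕ) = 0 then 0 else |γ l|) ≤
        (ν.totalVariation ({t : T → ℝ | ∀ j, 0 ≤ t j ∧ t j < 1} \ {fun _ => 0})).toReal ∧
      ∀ x : T → ℝ, (∀ k, x k ∈ Set.range (u k)) →
        sIntegral ν (fun t => ∏ j, max (x j - t j) 0) =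
          ∑ l : ∀ k, Fin (m k), γ l * ∏ j, max (x j - u j (l j).castSucc) 0 := by
  classical
  choose φ hφm hφ0 hφ1 hφz hφr using fun k => hat_exists (m k) (u k) (hu k) (h0 k) (h1 k)
  rw [SignedMeasure.totalVariation, Measure.add_apply, add_eq_zero] at hν
  obtain ⟨p1, p2⟩ := proj_measure m u φ hφm hφ0 hφ1 hφz hφr _ hν.1
  obtain ⟨n1, n2⟩ := proj_measure m u φ hφm hφ0 hφ1 hφz hφr _ hν.2
  refine ⟨fun l => (∫ t, ∏ j, φ j (l j) (t j) ∂ν.toJordanDecomposition.posPart) -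
    ∫ t, ∏ j, φ j (l j) (t j) ∂ν.toJordanDecomposition.negPart, ?_, ?_⟩
  · rw [SignedMeasure.totalVariation, Measure.add_apply, ENNReal.toReal_add
      (measure_ne_top _ _) (measure_ne_top _ _)]
    refine le_trans ?_ (add_le_add p1 n1)
    rw [← Finset.sum_add_distrib]
    refine Finset.sum_le_sum fun l _ => ?_
    split_ifs
    · simp
    · refine (abs_sub _ _).trans ?_
      rw [abs_of_nonneg, abs_of_nonneg]
      all_goals exact integral_nonneg fun t => Finset.prod_nonneg fun j _ => hφ0 _ _ _
  · intro x hx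
    rw [sIntegral, p2 x hx, n2 x hx, ← Finset.sum_sub_distrib]
    exact Finset.sum_congr rfl fun l _ => (sub_mul _ _ _).symm

theorem to_lasso (d nn : ℕ) (x : Fin nn → Fin d → ℝ) (V : ℝ) (hV : 0 < V)
    (m : Fin d → ℕ) (u : ∀ k, Fin (m k + 1) → ℝ)
    (humono : ∀ k, StrictMono (u k)) (hu0 : ∀ k, u k 0 = 0)
    (hu1 : ∀ k, u k (Fin.last (m k)) = 1)
    (hr : ∀ i k, x i k ∈ Set.range (u k)) (R : MarsRep d)
    (hR : marsVar R ≤ ENNReal.ofReal V) :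
    ∃ q : LassoParam d m, penA d m q ≤ V ∧
      ∀ i, fitA d nn x m u q i = marsFun R (x i) := by
  classical
  choose γ h1 h2 using fun S : Finset (Fin d) => proj_signed (T := {j // j ∈ S})
    (fun j => m j.1) (fun j => u j.1) (fun j => humono _) (fun j => hu0 _) (fun j => hu1 _)
    (R.ν S) (R.conc S)
  refine ⟨(R.a0, γ), ?_, ?_⟩
  · have : (marsVar R).toReal ≤ V := ENNReal.toReal_le_of_le_ofReal hV.le hR
    refine le_trans ?_ this
    rw [marsVar, ENNReal.toReal_sum]
    · refine Finset.sum_le_sum fun S _ => ?_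
      split_ifs
      · exact h1 S
      · simp
    · intro S _
      split_ifs
      · rw [SignedMeasure.totalVariation, Measure.add_apply]
        exact ENNReal.add_ne_top.2 ⟨measure_ne_top _ _, measure_ne_top _ _⟩
      · simp
  · intro i
    rw [fitA, marsFun]
    congr 1
    refine Finset.sum_congr rfl fun S _ => ?_
    split_ifs
    · exact (h2 S (fun j => x i j.1) fun k => hr i k.1).symm
    · rfl

theorem of_lasso (d : ℕ) (m : Fin d → ℕ) (u : ∀ k, Fin (m k + 1) → ℝ)
    (humono : ∀ k, StrictMono (u k)) (hu0 : ∀ k, u k 0 = 0)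
    (hu1 : ∀ k, u k (Fin.last (m k)) = 1) (p : LassoParam d m) :
    ∃ R : MarsRep d, R.a0 = p.1 ∧
        (∀ S : Finset (Fin d), S.Nonempty →
          ∀ E : Set ({j // j ∈ S} → ℝ), MeasurableSet E →
            R.ν S E = ∑ l : ∀ j : {j // j ∈ S}, Fin (m j.1),
              Set.indicator E (fun _ => (1 : ℝ))
                  (fun j => u j.1 ((l j).castSucc)) * p.2 S l) ∧
        marsVar R ≤ ENNReal.ofReal (penA d m p) ∧
        ∀ (nn : ℕ) (x : Fin nn → Fin d → ℝ) i, marsFun R (x i) = fitA d nn x m u p i := by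
  classical
  have hinj : ∀ S : Finset (Fin d), Function.Injective
      (fun (l : ∀ j : {j // j ∈ S}, Fin (m j.1)) (j : {j // j ∈ S}) =>
        u j.1 ((l j).castSucc)) := by
    intro S l l' h
    funext j
    exact Fin.castSucc_injective _ ((humono _).injective (congrFun h j))
  choose ν h1 h2 h3 using fun S : Finset (Fin d) => disc_exists _ (hinj S) (p.2 S)
  have hcm : ∀ S : Finset (Fin d),
      MeasurableSet {t : {j // j ∈ S} → ℝ | ∀ j, 0 ≤ t j ∧ t j < 1} := by
    intro S
    have : {t : {j // j ∈ S} → ℝ | ∀ j, 0 ≤ t j ∧ t j < 1}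
        = Set.univ.pi fun _ => Set.Ico 0 1 := by
      ext t; simp [Set.mem_pi]
    rw [this]
    exact MeasurableSet.univ_pi fun _ => measurableSet_Ico
  have hmem : ∀ (S : Finset (Fin d)) (l : ∀ j : {j // j ∈ S}, Fin (m j.1)),
      (fun j : {j // j ∈ S} => u j.1 ((l j).castSucc)) ∈
        {t : {j // j ∈ S} → ℝ | ∀ j, 0 ≤ t j ∧ t j < 1} := by
    intro S l j
    constructor
    · rw [← hu0 j.1]; exact (humono _).monotone (Fin.zero_le _)
    · rw [← hu1 j.1]; exact humono _ (Fin.castSucc_lt_last _)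
  refine ⟨⟨p.1, ν, ?_⟩, rfl, fun S _ E hE => h1 S E hE, ?_, ?_⟩
  · intro S
    rw [h2 S _ (hcm S).compl, Finset.sum_eq_zero, ENNReal.ofReal_zero]
    intro l _
    rw [Set.indicator_of_notMem, zero_mul]
    exact fun h => h (hmem S l)
  · rw [marsVar, penA, ENNReal.ofReal_sum_of_nonneg]
    · refine Finset.sum_le_sum fun S _ => ?_
      split_ifs
      · show (ν S).totalVariation _ ≤ _
        rw [h2 S _ ((hcm S).diff (measurableSet_singleton _))]
        refine ENNReal.ofReal_le_ofReal (Finset.sum_le_sum fun l _ => ?_)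
        split_ifs with h
        · rw [Set.indicator_of_notMem, zero_mul]
          rintro ⟨_, hh⟩
          apply hh
          funext j
          show u j.1 _ = 0
          rw [← hu0 j.1]
          congr 1
          ext
          simp [h j]
        · exact mul_le_of_le_one_left (abs_nonneg _)
            (Set.indicator_apply_le' (fun _ => le_rfl) (fun _ => zero_le_one))
      · simp
    · intro S _
      split_ifs
      · refine Finset.sum_nonneg fun l _ => ?_
        split_ifs
        · exact le_rfl
        · exact abs_nonneg _
      · exact le_rfl
  · intro nn x i
    rw [fitA, marsFun]
    congr 1
    refine Finset.sum_congr rfl fun S _ => ?_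
    split_ifs
    · exact h3 S _
    · rfl

theorem fitA_add (d nn : ℕ) (x : Fin nn → Fin d → ℝ) (m : Fin d → ℕ)
    (u : ∀ k, Fin (m k + 1) → ℝ) (p q : LassoParam d m) (i : Fin nn) :
    fitA d nn x m u (p + q) i = fitA d nn x m u p i + fitA d nn x m u q i := by
  simp only [fitA, Prod.fst_add, Prod.snd_add, Pi.add_apply]
  rw [add_add_add_comm, ← Finset.sum_add_distrib]
  congr 1
  refine Finset.sum_congr rfl fun S _ => ?_
  split_ifs
  · rw [← Finset.sum_add_distrib]
    exact Finset.sum_congr rfl fun l _ => add_mul _ _ _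
  · simp

theorem fitA_smul (d nn : ℕ) (x : Fin nn → Fin d → ℝ) (m : Fin d → ℕ)
    (u : ∀ k, Fin (m k + 1) → ℝ) (c : ℝ) (p : LassoParam d m) (i : Fin nn) :
    fitA d nn x m u (c • p) i = c * fitA d nn x m u p i := by
  simp only [fitA, Prod.smul_fst, Prod.smul_snd, Pi.smul_apply, smul_eq_mul]
  rw [mul_add, Finset.mul_sum]
  congr 1
  refine Finset.sum_congr rfl fun S _ => ?_
  split_ifs
  · rw [Finset.mul_sum]
    exact Finset.sum_congr rfl fun l _ => mul_assoc _ _ _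
  · simp

theorem penA_add (d : ℕ) (m : Fin d → ℕ) (p q : LassoParam d m) :
    penA d m (p + q) ≤ penA d m p + penA d m q := by
  simp only [penA, Prod.snd_add, Pi.add_apply]
  rw [← Finset.sum_add_distrib]
  refine Finset.sum_le_sum fun S _ => ?_
  split_ifs
  · rw [← Finset.sum_add_distrib]
    refine Finset.sum_le_sum fun l _ => ?_
    split_ifs
    · simp
    · exact abs_add_le _ _
  · simp

theorem penA_smul (d : ℕ) (m : Fin d → ℕ) (c : ℝ) (p : LassoParam d m) :
    penA d m (c • p) = |c| * penA d m p := by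
  simp only [penA, Prod.smul_snd, Pi.smul_apply, smul_eq_mul]
  rw [Finset.mul_sum]
  refine Finset.sum_congr rfl fun S _ => ?_
  split_ifs
  · rw [Finset.mul_sum]
    refine Finset.sum_congr rfl fun l _ => ?_
    split_ifs
    · simp
    · exact abs_mul _ _
  · simp

theorem penA_continuous (d : ℕ) (m : Fin d → ℕ) : Continuous (penA d m) := by
  unfold penA
  refine continuous_finsetSum _ fun S _ => ?_
  split_ifs
  · refine continuous_finsetSum _ fun l _ => ?_
    split_ifs
    · exact continuous_const
    · fun_prop
  · exact continuous_const

theorem penA_coord (d : ℕ) (m : Fin d → ℕ) (p : LassoParam d m) (S : Finset (Fin d))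
    (l : ∀ j : {j // j ∈ S}, Fin (m j.1)) (h : ¬ ∀ j, (l j : ℕ) = 0) :
    |p.2 S l| ≤ penA d m p := by
  have hS : S.Nonempty := by
    push Not at h
    obtain ⟨j, _⟩ := h
    exact ⟨j.1, j.2⟩
  have h0 : ∀ (S : Finset (Fin d)) (l : ∀ j : {j // j ∈ S}, Fin (m j.1)),
      0 ≤ if ∀ j, (l j : ℕ) = 0 then 0 else |p.2 S l| := by
    intro S l
    split_ifs
    · exact le_rfl
    · exact abs_nonneg _
  have e1 := Finset.single_le_sum (f := fun l : ∀ j : {j // j ∈ S}, Fin (m j.1) =>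
    if ∀ j, (l j : ℕ) = 0 then 0 else |p.2 S l|) (fun l _ => h0 S l) (Finset.mem_univ l)
  have e2 := Finset.single_le_sum (f := fun S : Finset (Fin d) => if S.Nonempty then
    ∑ l : ∀ j : {j // j ∈ S}, Fin (m j.1), if ∀ j, (l j : ℕ) = 0 then 0 else |p.2 S l|
    else 0) (fun S _ => by
      split_ifs
      · exact Finset.sum_nonneg fun l _ => h0 S l
      · exact le_rfl) (Finset.mem_univ S)
  rw [if_neg h] at e1
  rw [if_pos hS] at e2
  exact e1.trans e2

open scoped Pointwise in
theorem exists_minA (d nn : ℕ) (x : Fin nn → Fin d → ℝ) (y : Fin nn → ℝ) (V : ℝ) (hV : 0 < V)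
    (m : Fin d → ℕ) (u : ∀ k, Fin (m k + 1) → ℝ) :
    ∃ p : LassoParam d m, penA d m p ≤ V ∧
        ∀ q : LassoParam d m, penA d m q ≤ V →
          objA d nn x y m u p ≤ objA d nn x y m u q := by
  classical
  let F : LassoParam d m →ₗ[ℝ] EuclideanSpace ℝ (Fin nn) :=
    { toFun := fun p => WithLp.toLp 2 (fitA d nn x m u p)
      map_add' := fun p q => by ext i; exact fitA_add d nn x m u p q i
      map_smul' := fun c p => by ext i; exact fitA_smul d nn x m u c p i }
  let L : Submodule ℝ (LassoParam d m) :=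
    { carrier := {p | ∀ S l, (¬ ∀ j, (l j : ℕ) = 0) → p.2 S l = 0}
      zero_mem' := fun S l _ => rfl
      add_mem' := fun {a b} ha hb S l h => by
        simp [ha S l h, hb S l h]
      smul_mem' := fun c a ha S l h => by
        simp [ha S l h] }
  let B : LassoParam d m := (0, fun S l => if ∀ j, (l j : ℕ) = 0 then 0 else V)
  let C : Set (LassoParam d m) := Set.Icc (-B) B ∩ {p | penA d m p ≤ V}
  have hC : IsCompact C :=
    isCompact_Icc.inter_right (isClosed_le (penA_continuous d m) continuous_const)
  have hFc : Continuous F := F.continuous_of_finiteDimensional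
  have hclosed : IsClosed ((L.map F : Set (EuclideanSpace ℝ (Fin nn))) + F '' C) :=
    (Submodule.closed_of_finiteDimensional _).add_right_of_isCompact (hC.image hFc)
  have hpenL : ∀ p ∈ L, penA d m p ≤ 0 := by
    intro p hp
    refine Finset.sum_nonpos fun S _ => ?_
    split_ifs
    · refine Finset.sum_nonpos fun l _ => ?_
      split_ifs with h
      · exact le_rfl
      · rw [hp S l h, abs_zero]
    · exact le_rfl
  have hset : ((L.map F : Set (EuclideanSpace ℝ (Fin nn))) + F '' C) =
      F '' {p | penA d m p ≤ V} := by
    ext v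
    constructor
    · rintro ⟨_, ⟨p, hp, rfl⟩, _, ⟨q, hq, rfl⟩, rfl⟩
      refine ⟨p + q, ?_, map_add F p q⟩
      have := hpenL p hp
      have h2 : penA d m q ≤ V := hq.2
      exact (penA_add d m p q).trans (by linarith)
    · rintro ⟨p, hp, rfl⟩
      let q : LassoParam d m := (0, fun S l => if ∀ j, (l j : ℕ) = 0 then 0 else p.2 S l)
      have hq : p - q ∈ L := by
        intro S l h
        simp only [q, Prod.snd_sub, Pi.sub_apply, if_neg h, sub_self]
      have hpq : penA d m q ≤ V := by
        have := penA_add d m (q - p) p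
        rw [sub_add_cancel] at this
        have h2 := hpenL (q - p) (by rw [← neg_sub]; exact L.neg_mem hq)
        have h3 : penA d m p ≤ V := hp
        linarith
      refine ⟨F (p - q), ⟨p - q, hq, rfl⟩, F q, ⟨q, ⟨⟨⟨?_, ?_⟩, ⟨?_, ?_⟩⟩, hpq⟩, rfl⟩, ?_⟩
      · simp [q, B]
      · intro S l
        by_cases h : ∀ j, (l j : ℕ) = 0
        · simp [q, B, h]
        · simp only [q, B, Prod.snd_neg, Pi.neg_apply, if_neg h]
          exact (abs_le.1 ((penA_coord d m p S l h).trans hp)).1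
      · simp [q, B]
      · intro S l
        by_cases h : ∀ j, (l j : ℕ) = 0
        · simp [q, B, h]
        · simp only [q, B, if_neg h]
          exact (abs_le.1 ((penA_coord d m p S l h).trans hp)).2
      · show F (p - q) + F q = F p
        rw [← map_add, sub_add_cancel]
  rw [hset] at hclosed
  have hne : (F '' {p | penA d m p ≤ V}).Nonempty :=
    ⟨F 0, 0, (hpenL 0 L.zero_mem).trans hV.le, rfl⟩
  obtain ⟨_, ⟨p, hp, rfl⟩, hmin⟩ := hclosed.exists_infDist_eq_dist hne (WithLp.toLp 2 y)
  refine ⟨p, hp, fun q hq => ?_⟩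
  have hobj : ∀ p, objA d nn x y m u p = dist (WithLp.toLp 2 y) (F p) ^ 2 := by
    intro p
    rw [EuclideanSpace.dist_eq, Real.sq_sqrt (Finset.sum_nonneg fun _ _ => sq_nonneg _)]
    refine Finset.sum_congr rfl fun i _ => ?_
    rw [Real.dist_eq, sq_abs]
    rfl
  rw [hobj, hobj, ← hmin]
  exact pow_le_pow_left₀ Metric.infDist_nonneg (Metric.infDist_le_dist_of_mem (Set.mem_image_of_mem F hq)) 2

theorem unique_fitA (d nn : ℕ) (x : Fin nn → Fin d → ℝ) (y : Fin nn → ℝ) (V : ℝ)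
    (m : Fin d → ℕ) (u : ∀ k, Fin (m k + 1) → ℝ) (p q : LassoParam d m)
    (hp : penA d m p ≤ V ∧ ∀ r : LassoParam d m, penA d m r ≤ V →
        objA d nn x y m u p ≤ objA d nn x y m u r)
    (hq : penA d m q ≤ V ∧ ∀ r : LassoParam d m, penA d m r ≤ V →
        objA d nn x y m u q ≤ objA d nn x y m u r) (i : Fin nn) :
    fitA d nn x m u p i = fitA d nn x m u q i := by
  have hr : penA d m ((1 / 2 : ℝ) • (p + q)) ≤ V := by
    rw [penA_smul, abs_of_pos (by norm_num)]
    linarith [penA_add d m p q, hp.1, hq.1]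
  have h1 := hp.2 _ hr
  have h2 := hq.2 _ hr
  have hid : 2 * objA d nn x y m u ((1 / 2 : ℝ) • (p + q)) +
      (1 / 2) * ∑ i, (fitA d nn x m u p i - fitA d nn x m u q i) ^ 2 =
      objA d nn x y m u p + objA d nn x y m u q := by
    simp only [objA, fitA_smul, fitA_add]
    rw [Finset.mul_sum, Finset.mul_sum, ← Finset.sum_add_distrib, ← Finset.sum_add_distrib]
    refine Finset.sum_congr rfl fun i _ => ?_
    ring
  have hz : ∑ i, (fitA d nn x m u p i - fitA d nn x m u q i) ^ 2 = 0 :=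
    le_antisymm (by linarith) (Finset.sum_nonneg fun _ _ => sq_nonneg _)
  have := (Finset.sum_eq_zero_iff_of_nonneg fun _ _ => sq_nonneg _).1 hz i (Finset.mem_univ i)
  exact sub_eq_zero.1 (pow_eq_zero_iff two_ne_zero |>.1 this)

/-- Equivalence of the finite-dimensional LASSO problem (a) and the
infinite-dimensional MARS problem (b): (a) attains its minimum; the fitted vector is the
same for every minimizer of (a); for any minimizer of (a), the induced discrete MARS
representation is feasible for (b), attains its minimum, the optimal values coincide,
and every minimizer of (b) has the same fitted values `â₀ + (Mγ̂)_i`. -/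
theorem statement10 (d : ℕ) (hd : 1 ≤ d) (nn : ℕ) (x : Fin nn → Fin d → ℝ)
    (hx : ∀ i k, x i k ∈ Set.Icc (0 : ℝ) 1) (y : Fin nn → ℝ) (V : ℝ) (hV : 0 < V)
    (m : Fin d → ℕ) (u : ∀ k, Fin (m k + 1) → ℝ)
    (humono : ∀ k, StrictMono (u k)) (hu0 : ∀ k, u k 0 = 0)
    (hu1 : ∀ k, u k (Fin.last (m k)) = 1)
    (hurange : ∀ k, Set.range (u k) = {r : ℝ | r = 0 ∨ r = 1 ∨ ∃ i, x i k = r}) :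
    (∃ p : LassoParam d m, penA d m p ≤ V ∧
        ∀ q : LassoParam d m, penA d m q ≤ V →
          objA d nn x y m u p ≤ objA d nn x y m u q) ∧
    (∀ p q : LassoParam d m,
      (penA d m p ≤ V ∧ ∀ r : LassoParam d m, penA d m r ≤ V →
        objA d nn x y m u p ≤ objA d nn x y m u r) →
      (penA d m q ≤ V ∧ ∀ r : LassoParam d m, penA d m r ≤ V →
        objA d nn x y m u q ≤ objA d nn x y m u r) →
      ∀ i, fitA d nn x m u p i = fitA d nn x m u q i) ∧
    (∀ p : LassoParam d m,
      (penA d m p ≤ V ∧ ∀ r : LassoParam d m, penA d m r ≤ V →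
        objA d nn x y m u p ≤ objA d nn x y m u r) →
      ∃ R : MarsRep d, R.a0 = p.1 ∧
        (∀ S : Finset (Fin d), S.Nonempty →
          ∀ E : Set ({j // j ∈ S} → ℝ), MeasurableSet E →
            R.ν S E = ∑ l : ∀ j : {j // j ∈ S}, Fin (m j.1),
              Set.indicator E (fun _ => (1 : ℝ))
                  (fun j => u j.1 ((l j).castSucc)) * p.2 S l) ∧
        marsVar R ≤ ENNReal.ofReal V ∧
        (∀ R' : MarsRep d, marsVar R' ≤ ENNReal.ofReal V →
          objB d nn x y R ≤ objB d nn x y R') ∧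
        objA d nn x y m u p = objB d nn x y R ∧
        (∀ R' : MarsRep d, marsVar R' ≤ ENNReal.ofReal V →
          (∀ R'' : MarsRep d, marsVar R'' ≤ ENNReal.ofReal V →
            objB d nn x y R' ≤ objB d nn x y R'') →
          ∀ i, marsFun R' (x i) = fitA d nn x m u p i)) := by
  have hr : ∀ i k, x i k ∈ Set.range (u k) := by
    intro i k
    rw [hurange k]
    exact Or.inr (Or.inr ⟨i, rfl⟩)
  have obj_eq : ∀ (q : LassoParam d m) (R : MarsRep d),
      (∀ i, fitA d nn x m u q i = marsFun R (x i)) →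
      objA d nn x y m u q = objB d nn x y R := by
    intro q R h
    simp only [objA, objB, h]
  refine ⟨exists_minA d nn x y V hV m u, unique_fitA d nn x y V m u, ?_⟩
  intro p hp
  obtain ⟨R, ha, hf, hv, hfit⟩ := of_lasso d m u humono hu0 hu1 p
  have hRp := obj_eq p R fun i => (hfit nn x i).symm
  refine ⟨R, ha, hf, hv.trans (ENNReal.ofReal_le_ofReal hp.1), ?_, hRp, ?_⟩
  · intro R' hR'
    obtain ⟨q, hq, hqf⟩ := to_lasso d nn x V hV m u humono hu0 hu1 hr R' hR'
    rw [← hRp, ← obj_eq q R' hqf]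
    exact hp.2 q hq
  · intro R' hR' hmin i
    obtain ⟨q, hq, hqf⟩ := to_lasso d nn x V hV m u humono hu0 hu1 hr R' hR'
    rw [← hqf i]
    refine unique_fitA d nn x y V m u q p ⟨hq, fun r hr' => ?_⟩ hp i
    obtain ⟨R'', _, _, hv'', hfit''⟩ := of_lasso d m u humono hu0 hu1 r
    rw [obj_eq q R' hqf, obj_eq r R'' fun i => (hfit'' nn x i).symm]
    exact hmin R'' (hv''.trans (ENNReal.ofReal_le_ofReal hr'))
end

section
/- Let d ≥ 1, let n₁,…,n_d ≥ 2 be integers, and let the design points be the equally spaced lattice points (i₁/n₁, …, i_d/n_d) for i ∈ I₀. Then for every V > 0, the set of fitted-value vectors { (f_{a₀,{ν_S}}(i₁/n₁,…,i_d/n_d))_{i∈I₀} : (a₀,{ν_S}) a MARS representation with V({ν_S}) ≤ V } is exactly equal to C(V) = {θ : I₀ → ℝ : V₂(θ) ≤ V}. -/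
open Finset MeasureTheory
open scoped ENNReal

/-- The discrete mixed difference `(D^(β)θ)_i` (with `ℕ`-valued multi-indices). -/
noncomputable def mixedDiff (d : ℕ) (β : Fin d → ℕ) (θ : (Fin d → ℕ) → ℝ)
    (i : Fin d → ℕ) : ℝ :=
  ∑ δ ∈ Fintype.piFinset (fun k => Finset.range (β k + 1)),
    (-1 : ℝ) ^ (∑ k, δ k) * (∏ k, ((β k).choose (δ k) : ℝ)) * θ (fun k => i k - δ k)

/-- The index set `I₀^(β)`. -/
def idxBeta (d : ℕ) (n β : Fin d → ℕ) : Finset (Fin d → ℕ) :=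
  Fintype.piFinset fun k =>
    if β k = Finset.univ.sup β then Finset.Ico (Finset.univ.sup β) (n k)
    else {β k}

/-- The complexity measure `V₂(θ)`. -/
noncomputable def V2 (d : ℕ) (n : Fin d → ℕ) (θ : (Fin d → ℕ) → ℝ) : ℝ :=
  ∑ β ∈ (Fintype.piFinset fun _ : Fin d => Finset.range 3).filter
      (fun β => Finset.univ.sup β = 2),
    (∏ k, (n k : ℝ) ^ (if β k = 2 then 1 else β k)) *
      ∑ i ∈ idxBeta d n β, |mixedDiff d β θ i|

/-- Extension of a vector indexed by `I₀ = Π_k {0,…,n_k-1}` to all of `ℕ^d` (by `0`). -/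
noncomputable def latExtend (d : ℕ) (n : Fin d → ℕ)
    (θ : (∀ k : Fin d, Fin (n k)) → ℝ) : (Fin d → ℕ) → ℝ :=
  fun j => if h : ∀ k, j k < n k then θ (fun k => ⟨j k, h k⟩) else 0


noncomputable def Lop (p : ℕ) (g : ℕ → ℝ) : ℝ :=
  ∑ δ ∈ Finset.range (min p 2 + 1), (-1 : ℝ) ^ δ * ((min p 2).choose δ : ℝ) * g (p - δ)

lemma Lop_zero (g : ℕ → ℝ) : Lop 0 g = g 0 := by simp [Lop]

lemma Lop_one (g : ℕ → ℝ) : Lop 1 g = g 1 - g 0 := by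
  simp [Lop, Finset.sum_range_succ]; ring

lemma Lop_two (p : ℕ) (g : ℕ → ℝ) : Lop (p + 2) g = g (p + 2) - 2 * g (p + 1) + g p := by
  have : min (p + 2) 2 = 2 := by omega
  simp [Lop, this, Finset.sum_range_succ]; ring

lemma Lop_tele (g : ℕ → ℝ) (m : ℕ) :
    ∑ p ∈ Finset.range (m + 1), Lop (p + 1) g = g (m + 1) - g m := by
  induction m with
  | zero => simp [Lop_one]
  | succ m ih => rw [Finset.sum_range_succ, ih, Lop_two]; ring

noncomputable def bas (p i : ℕ) : ℝ := if p = 0 then 1 else ((i + 1 - p : ℕ) : ℝ)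

lemma bas_repr0 (g : ℕ → ℝ) (i : ℕ) :
    g 0 + ∑ p ∈ Finset.range i, ((i - p : ℕ) : ℝ) * Lop (p + 1) g = g i := by
  induction i with
  | zero => simp
  | succ i ih =>
    have h : ∑ p ∈ Finset.range (i + 1), ((i + 1 - p : ℕ) : ℝ) * Lop (p + 1) g
        = ∑ p ∈ Finset.range (i + 1), ((i - p : ℕ) : ℝ) * Lop (p + 1) g
          + ∑ p ∈ Finset.range (i + 1), Lop (p + 1) g := by
      rw [← Finset.sum_add_distrib]
      refine Finset.sum_congr rfl fun p hp => ?_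
      have : i + 1 - p = (i - p) + 1 := by have := Finset.mem_range.1 hp; omega
      rw [this]; push_cast; ring
    rw [h, Lop_tele, Finset.sum_range_succ]
    simp only [Nat.sub_self, Nat.cast_zero, zero_mul, add_zero]
    linarith

lemma bas_repr (g : ℕ → ℝ) (n i : ℕ) (hi : i < n) :
    ∑ p ∈ Finset.range n, bas p i * Lop p g = g i := by
  obtain ⟨m, rfl⟩ : ∃ m, n = (i + m) + 1 := ⟨n - i - 1, by omega⟩
  rw [Finset.sum_range_succ', Finset.sum_range_add]
  have : ∑ x ∈ Finset.range m, bas (i + x + 1) i * Lop (i + x + 1) g = 0 := by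
    refine Finset.sum_eq_zero fun x _ => ?_
    have : i + 1 - (i + x + 1) = 0 := by omega
    simp [bas, this]
  rw [this, ← bas_repr0 g i]
  simp [bas, Lop_zero]
  ring

noncomputable def cf {d : ℕ} (θ : (Fin d → ℕ) → ℝ) (p : Fin d → ℕ) : ℝ :=
  mixedDiff d (fun k => min (p k) 2) θ p

noncomputable def kd {d : ℕ} (p δ : Fin d → ℕ) : ℝ :=
  ∏ k, ((-1 : ℝ) ^ δ k * ((min (p k) 2).choose (δ k) : ℝ))

def dset {d : ℕ} (p : Fin d → ℕ) : Finset (Fin d → ℕ) :=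
  Fintype.piFinset (fun k => Finset.range (min (p k) 2 + 1))

lemma cf_eq {d : ℕ} (θ : (Fin d → ℕ) → ℝ) (p : Fin d → ℕ) :
    cf θ p = ∑ δ ∈ dset p, kd p δ * θ (fun k => p k - δ k) := by
  unfold cf mixedDiff dset kd
  refine Finset.sum_congr rfl fun δ _ => ?_
  rw [Finset.prod_mul_distrib, Finset.prod_pow_eq_pow_sum]

lemma cf_prod {d : ℕ} (g : Fin d → ℕ → ℝ) (p : Fin d → ℕ) :
    ∑ δ ∈ dset p, kd p δ * ∏ k, g k (p k - δ k) = ∏ k, Lop (p k) (g k) := by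
  unfold Lop dset kd
  rw [Finset.prod_univ_sum]
  refine Finset.sum_congr rfl fun δ _ => ?_
  rw [← Finset.prod_mul_distrib]

def I0 {d : ℕ} (n : Fin d → ℕ) : Finset (Fin d → ℕ) := Fintype.piFinset fun k => Finset.range (n k)

lemma mem_I0 {d : ℕ} {n : Fin d → ℕ} {p : Fin d → ℕ} : p ∈ I0 n ↔ ∀ k, p k < n k := by
  simp [I0]

lemma cf_ind {d : ℕ} (n : Fin d → ℕ) (θ : (Fin d → ℕ) → ℝ) (p : Fin d → ℕ) (hp : p ∈ I0 n) :
    cf θ p = ∑ q ∈ I0 n, (∏ k, Lop (p k) (fun m => if m = q k then 1 else 0)) * θ q := by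
  simp_rw [← cf_prod, cf_eq, Finset.sum_mul]
  rw [Finset.sum_comm]
  refine Finset.sum_congr rfl fun δ _ => ?_
  have hm : (fun k => p k - δ k) ∈ I0 n := by
    rw [mem_I0] at *
    intro k; have := hp k; omega
  rw [Finset.sum_eq_single_of_mem _ hm]
  · simp
  · intro q _ hq
    have : ∃ k, p k - δ k ≠ q k := by
      by_contra! h
      exact hq (funext fun k => (h k).symm)
    obtain ⟨k, hk⟩ := this
    rw [Finset.prod_eq_zero (Finset.mem_univ k) (by simp [hk])]
    simp

lemma multi_repr {d : ℕ} (n : Fin d → ℕ) (θ : (Fin d → ℕ) → ℝ) (i : Fin d → ℕ) (hi : i ∈ I0 n) :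
    ∑ p ∈ I0 n, (∏ k, bas (p k) (i k)) * cf θ p = θ i := by
  have h1 : ∀ q ∈ I0 n, ∑ p ∈ I0 n, (∏ k, bas (p k) (i k)) *
      ((∏ k, Lop (p k) (fun m => if m = q k then 1 else 0)) * θ q)
      = (∏ k, if i k = q k then 1 else 0) * θ q := by
    intro q _
    simp_rw [← mul_assoc, ← Finset.sum_mul, ← Finset.prod_mul_distrib]
    congr 1
    unfold I0
    rw [← Finset.prod_univ_sum (fun k => Finset.range (n k))
      (fun k x => bas x (i k) * Lop x (fun m => if m = q k then 1 else 0))]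
    refine Finset.prod_congr rfl fun k _ => ?_
    rw [bas_repr _ _ _ (mem_I0.1 hi k)]
  rw [Finset.sum_congr rfl (fun p hp => by rw [cf_ind n θ p hp, Finset.mul_sum]),
    Finset.sum_comm, Finset.sum_congr rfl h1, Finset.sum_eq_single_of_mem _ hi]
  · simp
  · intro q _ hq
    have : ∃ k, i k ≠ q k := by
      by_contra! h
      exact hq (funext fun k => (h k).symm)
    obtain ⟨k, hk⟩ := this
    rw [Finset.prod_eq_zero (Finset.mem_univ k) (by simp [hk])]
    simp

noncomputable def wt {d : ℕ} (n p : Fin d → ℕ) : ℝ := ∏ k, (if p k = 0 then 1 else (n k : ℝ))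

def P2 {d : ℕ} (n : Fin d → ℕ) : Finset (Fin d → ℕ) := (I0 n).filter fun p => ∃ k, 2 ≤ p k

lemma V2_eq {d : ℕ} (n : Fin d → ℕ) (hn : ∀ k, 2 ≤ n k) (θ : (Fin d → ℕ) → ℝ) :
    V2 d n θ = ∑ p ∈ P2 n, wt n p * |cf θ p| := by
  unfold V2
  have sup2 : ∀ β : Fin d → ℕ, (∀ k, β k ≤ 2) → ∀ k, β k = 2 → Finset.univ.sup β = 2 := by
    intro β h k hk
    apply le_antisymm
    · exact Finset.sup_le fun k _ => h k
    · rw [← hk]; exact Finset.le_sup (Finset.mem_univ k)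
  have hmaps : ∀ p ∈ P2 n, (fun k => min (p k) 2) ∈
      (Fintype.piFinset fun _ : Fin d => Finset.range 3).filter
      (fun β => Finset.univ.sup β = 2) := by
    intro p hp
    obtain ⟨_, k, hk⟩ := Finset.mem_filter.1 hp
    refine Finset.mem_filter.2 ⟨?_, ?_⟩
    · simp
    · exact sup2 _ (fun k => by omega) k (by omega)
  rw [← Finset.sum_fiberwise_of_maps_to hmaps]
  refine Finset.sum_congr rfl fun β hβ => ?_
  obtain ⟨hβ1, hβ2⟩ := Finset.mem_filter.1 hβ
  have hb : ∀ k, β k ≤ 2 := fun k => by rw [← hβ2]; exact Finset.le_sup (Finset.mem_univ k)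
  have hex : ∃ k, β k = 2 := by
    by_contra! h
    have : Finset.univ.sup β ≤ 1 := Finset.sup_le fun k _ => by have := hb k; have := h k; omega
    omega
  have hset : idxBeta d n β = (P2 n).filter (fun p => (fun k => min (p k) 2) = β) := by
    ext p
    simp only [idxBeta, hβ2, P2, Fintype.mem_piFinset, Finset.mem_filter, mem_I0, funext_iff]
    constructor
    · intro h
      have h' : ∀ k, p k < n k ∧ min (p k) 2 = β k := by
        intro k
        have h1 := h k
        have h2 := hb k
        have h3 := hn k
        split_ifs at h1 <;> simp at h1 <;> omega
      refine ⟨⟨fun k => (h' k).1, ?_⟩, fun k => (h' k).2⟩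
      obtain ⟨k, hk⟩ := hex
      exact ⟨k, by have := (h' k).2; omega⟩
    · rintro ⟨⟨h1, _⟩, h3⟩ k
      have h1 := h1 k
      have h3 := h3 k
      split_ifs <;> simp <;> omega
  rw [hset, Finset.mul_sum]
  refine Finset.sum_congr rfl fun p hp => ?_
  have hp2 := (Finset.mem_filter.1 hp).2
  subst hp2
  unfold cf wt
  congr 1
  refine Finset.prod_congr rfl fun k _ => ?_
  rcases h : p k with _ | _ | m
  · simp [h]
  · simp [h]
  · simp [h]

lemma hat_nonneg (n : ℕ) (t : ℝ) (ht : 0 ≤ t) (p : ℕ) :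
    0 ≤ Lop p (fun m => max ((m : ℝ) / n - t) 0) := by
  rcases p with _ | _ | p
  · simp [Lop_zero]
  · simp only [zero_add, Lop_one]
    simp [ht]
  · rw [Lop_two]
    have h1 : (((p + 1 : ℕ) : ℝ) / n - t) * 2 = (((p + 2 : ℕ) : ℝ) / n - t) + ((p : ℝ) / n - t) := by
      push_cast; ring
    have a1 := le_max_left (((p + 2 : ℕ) : ℝ) / n - t) 0
    have a2 := le_max_right (((p + 2 : ℕ) : ℝ) / n - t) 0
    have a3 := le_max_left ((p : ℝ) / n - t) 0
    have a4 := le_max_right ((p : ℝ) / n - t) 0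
    rcases max_choice (((p + 1 : ℕ) : ℝ) / n - t) 0 with h | h <;> rw [h] <;> linarith

lemma hat_sum (n : ℕ) (hn : 2 ≤ n) (t : ℝ) (ht : 0 ≤ t) :
    ∑ p ∈ Finset.range n, (if p = 0 then 1 else (n : ℝ)) *
      |Lop p (fun m => max ((m : ℝ) / n - t) 0)| ≤ 1 := by
  obtain ⟨m, rfl⟩ : ∃ m, n = (m + 1) + 1 := ⟨n - 2, by omega⟩
  simp_rw [abs_of_nonneg (hat_nonneg _ t ht _)]
  rw [Finset.sum_range_succ']
  simp only [Nat.add_eq_zero_iff, one_ne_zero, and_false, if_false, if_true]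
  rw [← Finset.mul_sum, Lop_tele, Lop_zero]
  have hpos : (0 : ℝ) < ((m + 1 + 1 : ℕ) : ℝ) := by positivity
  have h0 : max (((0 : ℕ) : ℝ) / ((m + 1 + 1 : ℕ) : ℝ) - t) 0 = 0 := by simp [ht]
  rw [h0]
  have h1 : max (((m + 1 : ℕ) : ℝ) / ((m + 1 + 1 : ℕ) : ℝ) - t) 0 -
      max ((m : ℝ) / ((m + 1 + 1 : ℕ) : ℝ) - t) 0 ≤ 1 / ((m + 1 + 1 : ℕ) : ℝ) := by
    have e : ((m + 1 : ℕ) : ℝ) / ((m + 1 + 1 : ℕ) : ℝ) - t =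
      ((m : ℝ) / ((m + 1 + 1 : ℕ) : ℝ) - t) + 1 / ((m + 1 + 1 : ℕ) : ℝ) := by push_cast; ring
    rw [e]
    have a3 := le_max_left ((m : ℝ) / ((m + 1 + 1 : ℕ) : ℝ) - t) 0
    have a4 := le_max_right ((m : ℝ) / ((m + 1 + 1 : ℕ) : ℝ) - t) 0
    have : 0 ≤ 1 / ((m + 1 + 1 : ℕ) : ℝ) := by positivity
    rw [sub_le_iff_le_add]
    apply max_le <;> linarith
  have h2 := mul_le_mul_of_nonneg_left h1 hpos.le
  rw [mul_one_div_cancel hpos.ne'] at h2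
  linarith

lemma Lop_const (p : ℕ) : Lop p (fun _ => 1) = if p = 0 then 1 else 0 := by
  rcases p with _ | _ | p
  · simp [Lop_zero]
  · simp [Lop_one]
  · rw [Lop_two]; norm_num

section Fwd
variable {d : ℕ}

def cube (S : Finset (Fin d)) : Set ({j // j ∈ S} → ℝ) := {t | ∀ j, 0 ≤ t j ∧ t j < 1}

noncomputable def phi (S : Finset (Fin d)) (n : Fin d → ℕ) (t : {j // j ∈ S} → ℝ) (k : Fin d)
    (m : ℕ) : ℝ := if h : k ∈ S then max ((m : ℝ) / n k - t ⟨k, h⟩) 0 else 1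

noncomputable def GG (S : Finset (Fin d)) (x : Fin d → ℝ) (t : {j // j ∈ S} → ℝ) : ℝ :=
  ∏ j : {j // j ∈ S}, max (x j.1 - t j) 0

noncomputable def HH (S : Finset (Fin d)) (n p : Fin d → ℕ) (t : {j // j ∈ S} → ℝ) : ℝ :=
  ∏ k, Lop (p k) (phi S n t k)

lemma prod_sub (S : Finset (Fin d)) (g : {j // j ∈ S} → ℝ) :
    ∏ k, (if h : k ∈ S then g ⟨k, h⟩ else 1) = ∏ j, g j := by
  rw [← Finset.prod_subset (Finset.subset_univ S)]
  · rw [← Finset.prod_coe_sort S]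
    exact Finset.prod_congr rfl fun j _ => by simp
  · intro k _ hk; simp [hk]

noncomputable def lat (n i : Fin d → ℕ) : Fin d → ℝ := fun k => (i k : ℝ) / n k

lemma HH_eq (S : Finset (Fin d)) (n p : Fin d → ℕ) (t : {j // j ∈ S} → ℝ) :
    HH S n p t = ∑ δ ∈ dset p, kd p δ * GG S (lat n fun k => p k - δ k) t := by
  unfold HH
  rw [← cf_prod]
  refine Finset.sum_congr rfl fun δ _ => ?_
  unfold phi GG lat
  rw [← prod_sub]

lemma wtHH_sum (S : Finset (Fin d)) (n : Fin d → ℕ) (hn : ∀ k, 2 ≤ n k)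
    (t : {j // j ∈ S} → ℝ) (ht : t ∈ cube S) :
    ∑ p ∈ I0 n, wt n p * |HH S n p t| ≤ 1 := by
  unfold wt HH I0
  simp_rw [Finset.abs_prod, ← Finset.prod_mul_distrib]
  rw [← Finset.prod_univ_sum (fun k => Finset.range (n k))
      (fun k x => (if x = 0 then 1 else (n k : ℝ)) * |Lop x (phi S n t k)|)]
  apply Finset.prod_le_one
  · intro k _
    refine Finset.sum_nonneg fun x _ => mul_nonneg ?_ (abs_nonneg _)
    split_ifs <;> positivity
  · intro k _
    by_cases hk : k ∈ S
    · have : phi S n t k = fun m : ℕ => max ((m : ℝ) / n k - t ⟨k, hk⟩) 0 := by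
        funext m; simp [phi, hk]
      rw [this]
      exact hat_sum _ (hn k) _ (ht ⟨k, hk⟩).1
    · have : phi S n t k = fun m : ℕ => 1 := by
        funext m; simp [phi, hk]
      simp_rw [this, Lop_const]
      rw [Finset.sum_eq_single 0]
      · simp
      · intro b _ hb; simp [hb]
      · intro h; have := hn k; simp at h; omega

lemma wt_nonneg (n p : Fin d → ℕ) : 0 ≤ wt n p := by
  unfold wt
  refine Finset.prod_nonneg fun k _ => ?_
  split_ifs <;> positivity

lemma HH_zero (S : Finset (Fin d)) (n : Fin d → ℕ) (p : Fin d → ℕ) (hp : p ∈ P2 n) :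
    HH S n p (fun _ => 0) = 0 := by
  obtain ⟨_, k, hk⟩ := Finset.mem_filter.1 hp
  refine Finset.prod_eq_zero (Finset.mem_univ k) ?_
  obtain ⟨m, hm⟩ : ∃ m, p k = m + 2 := ⟨p k - 2, by omega⟩
  rw [hm, Lop_two]
  by_cases hk : k ∈ S
  · have : ∀ m : ℕ, max ((m : ℝ) / n k) 0 = (m : ℝ) / n k := fun m => max_eq_left (by positivity)
    simp only [phi, hk, dif_pos, sub_zero, this]
    push_cast; ring
  · simp [phi, hk]; norm_num

lemma wtHH_le (S : Finset (Fin d)) (n : Fin d → ℕ) (hn : ∀ k, 2 ≤ n k)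
    (t : {j // j ∈ S} → ℝ) (ht : t ∈ cube S) :
    ∑ p ∈ P2 n, wt n p * |HH S n p t| ≤
      (cube S \ {fun _ => 0}).indicator (fun _ => (1 : ℝ)) t := by
  by_cases h0 : t = fun _ => 0
  · subst h0
    rw [Set.indicator_of_notMem (by simp)]
    apply le_of_eq
    exact Finset.sum_eq_zero fun p hp => by simp [HH_zero S n p hp]
  · rw [Set.indicator_of_mem (by exact ⟨ht, h0⟩)]
    refine le_trans (Finset.sum_le_sum_of_subset_of_nonneg (Finset.filter_subset _ _) ?_)
      (wtHH_sum S n hn t ht)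
    intro p _ _
    exact mul_nonneg (wt_nonneg _ _) (abs_nonneg _)

lemma measurable_cube (S : Finset (Fin d)) : MeasurableSet (cube S) := by
  have : cube S = Set.pi Set.univ (fun _ => Set.Ico (0 : ℝ) 1) := by
    ext t; simp [cube]
  rw [this]
  exact MeasurableSet.univ_pi fun _ => measurableSet_Ico

lemma GG_cont (S : Finset (Fin d)) (x : Fin d → ℝ) : Continuous (GG S x) := by
  unfold GG
  fun_prop

lemma GG_int (S : Finset (Fin d)) (x : Fin d → ℝ) (hx : ∀ k, 0 ≤ x k)
    (μ : Measure ({j // j ∈ S} → ℝ)) [IsFiniteMeasure μ] (hμ : μ (cube S)ᶜ = 0) :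
    Integrable (GG S x) μ := by
  refine Integrable.of_bound (GG_cont S x).aestronglyMeasurable (∏ j : {j // j ∈ S}, x j.1) ?_
  have : ∀ᵐ t ∂μ, t ∈ cube S := by rw [ae_iff]; exact hμ
  filter_upwards [this] with t ht
  unfold GG
  rw [Real.norm_eq_abs, Finset.abs_prod]
  refine Finset.prod_le_prod (fun _ _ => abs_nonneg _) fun j _ => ?_
  rw [abs_of_nonneg (le_max_right _ _)]
  exact max_le (by linarith [(ht j).1]) (hx _)

lemma lat_nonneg (n i : Fin d → ℕ) (k : Fin d) : 0 ≤ lat n i k := by unfold lat; positivity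

lemma HH_int (S : Finset (Fin d)) (n p : Fin d → ℕ)
    (μ : Measure ({j // j ∈ S} → ℝ)) [IsFiniteMeasure μ] (hμ : μ (cube S)ᶜ = 0) :
    Integrable (HH S n p) μ := by
  have : HH S n p = fun t => ∑ δ ∈ dset p, kd p δ * GG S (lat n fun k => p k - δ k) t := by
    funext t; exact HH_eq S n p t
  rw [this]
  exact integrable_finsetSum _ fun δ _ => (GG_int S _ (lat_nonneg _ _) μ hμ).const_mul _

lemma HH_integral (S : Finset (Fin d)) (n p : Fin d → ℕ)
    (μ : Measure ({j // j ∈ S} → ℝ)) [IsFiniteMeasure μ] (hμ : μ (cube S)ᶜ = 0) :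
    ∫ t, HH S n p t ∂μ = ∑ δ ∈ dset p, kd p δ * ∫ t, GG S (lat n fun k => p k - δ k) t ∂μ := by
  simp_rw [HH_eq]
  rw [integral_finsetSum _ fun δ _ => (GG_int S _ (lat_nonneg _ _) μ hμ).const_mul _]
  simp_rw [integral_const_mul]

lemma parts (S : Finset (Fin d)) (ν : SignedMeasure ({j // j ∈ S} → ℝ))
    (h : ν.totalVariation (cube S)ᶜ = 0) :
    ν.toJordanDecomposition.posPart (cube S)ᶜ = 0 ∧
    ν.toJordanDecomposition.negPart (cube S)ᶜ = 0 := by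
  unfold SignedMeasure.totalVariation at h
  simpa using h

lemma sInt_HH (S : Finset (Fin d)) (n p : Fin d → ℕ) (ν : SignedMeasure ({j // j ∈ S} → ℝ))
    (h : ν.totalVariation (cube S)ᶜ = 0) :
    ∑ δ ∈ dset p, kd p δ * sIntegral ν (GG S (lat n fun k => p k - δ k)) =
      sIntegral ν (HH S n p) := by
  obtain ⟨h1, h2⟩ := parts S ν h
  unfold sIntegral
  rw [HH_integral S n p _ h1, HH_integral S n p _ h2, ← Finset.sum_sub_distrib]
  exact Finset.sum_congr rfl fun δ _ => by ring

lemma sInt_le (S : Finset (Fin d)) (n p : Fin d → ℕ) (ν : SignedMeasure ({j // j ∈ S} → ℝ))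
    (h : ν.totalVariation (cube S)ᶜ = 0) :
    |sIntegral ν (HH S n p)| ≤ ∫ t, |HH S n p t| ∂ν.totalVariation := by
  obtain ⟨h1, h2⟩ := parts S ν h
  unfold sIntegral SignedMeasure.totalVariation
  rw [integral_add_measure (HH_int S n p _ h1).abs (HH_int S n p _ h2).abs]
  exact (abs_sub _ _).trans (add_le_add abs_integral_le_integral_abs abs_integral_le_integral_abs)

instance (S : Finset (Fin d)) (ν : SignedMeasure ({j // j ∈ S} → ℝ)) :
    IsFiniteMeasure ν.totalVariation := by
  unfold SignedMeasure.totalVariation; infer_instance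

lemma S_bound (S : Finset (Fin d)) (n : Fin d → ℕ) (hn : ∀ k, 2 ≤ n k)
    (ν : SignedMeasure ({j // j ∈ S} → ℝ)) (h : ν.totalVariation (cube S)ᶜ = 0) :
    ∑ p ∈ P2 n, wt n p * |sIntegral ν (HH S n p)| ≤
      (ν.totalVariation (cube S \ {fun _ => 0})).toReal := by
  have hm : MeasurableSet (cube S \ {fun _ => (0 : ℝ)}) :=
    (measurable_cube S).diff (measurableSet_singleton _)
  calc _ ≤ ∑ p ∈ P2 n, wt n p * ∫ t, |HH S n p t| ∂ν.totalVariation :=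
        Finset.sum_le_sum fun p _ => mul_le_mul_of_nonneg_left (sInt_le S n p ν h) (wt_nonneg _ _)
    _ = ∫ t, ∑ p ∈ P2 n, wt n p * |HH S n p t| ∂ν.totalVariation := by
        rw [integral_finsetSum _ fun p _ => ((HH_int S n p _ h).abs).const_mul _]
        simp_rw [integral_const_mul]
    _ ≤ ∫ t, (cube S \ {fun _ => 0}).indicator (fun _ => (1 : ℝ)) t ∂ν.totalVariation := by
        refine integral_mono_ae (integrable_finsetSum _ fun p _ => ((HH_int S n p _ h).abs).const_mul _)
          ((integrable_const _).indicator hm) ?_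
        have : ∀ᵐ t ∂ν.totalVariation, t ∈ cube S := by rw [ae_iff]; exact h
        filter_upwards [this] with t ht
        exact wtHH_le S n hn t ht
    _ = _ := by
        rw [integral_indicator_const _ hm]; simp [Measure.real]

lemma cf_mars (n : Fin d → ℕ) (R : MarsRep d) (θ : (Fin d → ℕ) → ℝ)
    (hθ : ∀ i ∈ I0 n, θ i = marsFun R (lat n i)) (p : Fin d → ℕ) (hp : p ∈ P2 n) :
    cf θ p = ∑ S : Finset (Fin d), if S.Nonempty then sIntegral (R.ν S) (HH S n p) else 0 := by
  obtain ⟨hp1, k, hk⟩ := Finset.mem_filter.1 hp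
  have hsum : ∑ δ ∈ dset p, kd p δ = 0 := by
    have := cf_prod (fun _ _ => 1) p
    simp only [Finset.prod_const_one, mul_one] at this
    rw [this]
    refine Finset.prod_eq_zero (Finset.mem_univ k) ?_
    rw [Lop_const, if_neg (by omega)]
  rw [cf_eq]
  have : ∀ δ ∈ dset p, kd p δ * θ (fun k => p k - δ k) = kd p δ * R.a0 +
      ∑ S : Finset (Fin d), if S.Nonempty then
        kd p δ * sIntegral (R.ν S) (GG S (lat n fun k => p k - δ k)) else 0 := by
    intro δ _
    rw [hθ _ (by rw [mem_I0] at *; intro k; have := hp1 k; omega)]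
    unfold marsFun
    rw [mul_add, Finset.mul_sum]
    simp_rw [mul_ite, mul_zero]
    rfl
  rw [Finset.sum_congr rfl this, Finset.sum_add_distrib, ← Finset.sum_mul, hsum, zero_mul, zero_add,
    Finset.sum_comm]
  refine Finset.sum_congr rfl fun S _ => ?_
  split_ifs with hS
  · exact sInt_HH S n p _ (R.conc S)
  · simp

lemma forward (n : Fin d → ℕ) (hn : ∀ k, 2 ≤ n k) (R : MarsRep d) (θ : (Fin d → ℕ) → ℝ)
    (hθ : ∀ i ∈ I0 n, θ i = marsFun R (lat n i)) : V2 d n θ ≤ (marsVar R).toReal := by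
  rw [V2_eq n hn]
  have e : (marsVar R).toReal = ∑ S : Finset (Fin d), if S.Nonempty then
      ((R.ν S).totalVariation (cube S \ {fun _ => 0})).toReal else 0 := by
    unfold marsVar
    rw [ENNReal.toReal_sum]
    · refine Finset.sum_congr rfl fun S _ => ?_
      split_ifs <;> rfl
    · intro S _
      split_ifs
      · exact measure_ne_top _ _
      · simp
  rw [e]
  calc _ ≤ ∑ p ∈ P2 n, ∑ S : Finset (Fin d),
        (if S.Nonempty then wt n p * |sIntegral (R.ν S) (HH S n p)| else 0) := by
        refine Finset.sum_le_sum fun p hp => ?_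
        rw [cf_mars n R θ hθ p hp]
        refine (mul_le_mul_of_nonneg_left (Finset.abs_sum_le_sum_abs _ _) (wt_nonneg _ _)).trans ?_
        rw [Finset.mul_sum]
        refine Finset.sum_le_sum fun S _ => ?_
        split_ifs <;> simp
    _ = ∑ S : Finset (Fin d), ∑ p ∈ P2 n,
        (if S.Nonempty then wt n p * |sIntegral (R.ν S) (HH S n p)| else 0) := Finset.sum_comm
    _ ≤ _ := by
        refine Finset.sum_le_sum fun S _ => ?_
        split_ifs
        · exact S_bound S n hn _ (R.conc S)
        · simp
end Fwd

section Bwd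
variable {d : ℕ}

def spt (p : Fin d → ℕ) : Finset (Fin d) := Finset.univ.filter fun k => p k ≠ 0

noncomputable def pt (n : Fin d → ℕ) (S : Finset (Fin d)) (p : Fin d → ℕ) : {j // j ∈ S} → ℝ :=
  fun j => ((p j.1 - 1 : ℕ) : ℝ) / n j.1

def FS (n : Fin d → ℕ) (S : Finset (Fin d)) : Finset (Fin d → ℕ) :=
  (I0 n).filter fun p => spt p = S

lemma pt_mem (n : Fin d → ℕ) (S : Finset (Fin d)) (p : Fin d → ℕ) (hp : p ∈ FS n S) :
    pt n S p ∈ cube S := by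
  intro j
  have h := mem_I0.1 (Finset.mem_filter.1 hp).1 j.1
  have hpos : (0 : ℝ) < n j.1 := by exact_mod_cast (by omega : 0 < n j.1)
  refine ⟨by unfold pt; positivity, ?_⟩
  unfold pt
  rw [div_lt_one hpos]
  exact_mod_cast (by omega : p j.1 - 1 < n j.1)

lemma spt_iff {S : Finset (Fin d)} {p : Fin d → ℕ} (h : spt p = S) (k : Fin d) :
    k ∈ S ↔ p k ≠ 0 := by
  rw [← h]; simp [spt]

lemma pt_inj (n : Fin d → ℕ) (S : Finset (Fin d)) (p q : Fin d → ℕ) (hp : p ∈ FS n S)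
    (hq : q ∈ FS n S) (h : pt n S p = pt n S q) : p = q := by
  obtain ⟨hp1, hp2⟩ := Finset.mem_filter.1 hp
  obtain ⟨hq1, hq2⟩ := Finset.mem_filter.1 hq
  funext k
  have h1 := spt_iff hp2 k
  have h2 := spt_iff hq2 k
  by_cases hk : k ∈ S
  · have h3 := congrFun h ⟨k, hk⟩
    have h := mem_I0.1 hp1 k
    have hpos : (n k : ℝ) ≠ 0 := by exact_mod_cast (by omega : n k ≠ 0)
    simp only [pt] at h3
    rw [div_left_inj' hpos] at h3
    have h4 : p k - 1 = q k - 1 := by exact_mod_cast h3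
    have := h1.1 hk
    have := h2.1 hk
    omega
  · have : p k = 0 := by by_contra h; exact hk (h1.2 h)
    have : q k = 0 := by by_contra h; exact hk (h2.2 h)
    omega

noncomputable def posM (n : Fin d → ℕ) (S : Finset (Fin d)) (a : (Fin d → ℕ) → ℝ) :
    Measure ({j // j ∈ S} → ℝ) :=
  ∑ p ∈ FS n S, ENNReal.ofReal (a p) • Measure.dirac (pt n S p)

lemma posM_apply (n : Fin d → ℕ) (S : Finset (Fin d)) (a : (Fin d → ℕ) → ℝ)
    (A : Set ({j // j ∈ S} → ℝ)) :
    posM n S a A = ∑ p ∈ FS n S, ENNReal.ofReal (a p) * A.indicator 1 (pt n S p) := by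
  simp [posM, Measure.finsetSum_apply, Measure.dirac_apply]

instance (n : Fin d → ℕ) (S : Finset (Fin d)) (a : (Fin d → ℕ) → ℝ) :
    IsFiniteMeasure (posM n S a) := by
  constructor
  rw [posM_apply]
  refine ENNReal.sum_lt_top.2 fun p _ => ?_
  simp

lemma posM_sing (n : Fin d → ℕ) (S : Finset (Fin d)) (a : (Fin d → ℕ) → ℝ) :
    (posM n S a).MutuallySingular (posM n S (fun p => - a p)) := by
  refine ⟨((FS n S).filter fun p => a p ≤ 0).image (pt n S), Finset.measurableSet _, ?_, ?_⟩
  · rw [posM_apply]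
    refine Finset.sum_eq_zero fun p hp => ?_
    by_cases h : a p ≤ 0
    · simp [ENNReal.ofReal_of_nonpos h]
    · rw [Set.indicator_of_notMem, mul_zero]
      simp only [Finset.coe_image, Set.mem_image, Finset.mem_coe, Finset.mem_filter]
      rintro ⟨q, ⟨hq, hq2⟩, he⟩
      have := pt_inj n S q p hq hp he
      subst this
      exact h hq2
  · rw [posM_apply]
    refine Finset.sum_eq_zero fun p hp => ?_
    by_cases h : a p ≤ 0
    · rw [Set.indicator_of_notMem, mul_zero]
      simp only [Finset.coe_image, Set.mem_compl_iff, not_not]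
      exact Set.mem_image_of_mem _ (by simpa using ⟨hp, h⟩)
    · have : - a p ≤ 0 := by linarith
      simp [ENNReal.ofReal_of_nonpos this]

noncomputable def jd (n : Fin d → ℕ) (S : Finset (Fin d)) (a : (Fin d → ℕ) → ℝ) :
    JordanDecomposition ({j // j ∈ S} → ℝ) where
  posPart := posM n S a
  negPart := posM n S (fun p => - a p)
  mutuallySingular := posM_sing n S a

lemma jd_tv (n : Fin d → ℕ) (S : Finset (Fin d)) (a : (Fin d → ℕ) → ℝ)
    (A : Set ({j // j ∈ S} → ℝ)) :
    (jd n S a).toSignedMeasure.totalVariation A =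
      ∑ p ∈ FS n S, ENNReal.ofReal |a p| * A.indicator 1 (pt n S p) := by
  unfold SignedMeasure.totalVariation
  rw [JordanDecomposition.toJordanDecomposition_toSignedMeasure]
  simp only [jd, Measure.add_apply, posM_apply]
  rw [← Finset.sum_add_distrib]
  refine Finset.sum_congr rfl fun p _ => ?_
  rw [← add_mul]
  congr 1
  rcases le_total 0 (a p) with h | h
  · rw [abs_of_nonneg h, ENNReal.ofReal_of_nonpos (by linarith : - a p ≤ 0), add_zero]
  · rw [abs_of_nonpos h, ENNReal.ofReal_of_nonpos h, zero_add]

lemma posM_integral (n : Fin d → ℕ) (S : Finset (Fin d)) (a : (Fin d → ℕ) → ℝ)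
    (g : ({j // j ∈ S} → ℝ) → ℝ) :
    ∫ t, g t ∂(posM n S a) = ∑ p ∈ FS n S, max (a p) 0 * g (pt n S p) := by
  unfold posM
  rw [integral_finsetSum_measure]
  · refine Finset.sum_congr rfl fun p _ => ?_
    rw [integral_smul_measure, integral_dirac]
    simp [ENNReal.toReal_ofReal']
  · intro p _
    refine Integrable.smul_measure ?_ (by simp)
    exact integrable_dirac (by simp)

lemma jd_sInt (n : Fin d → ℕ) (S : Finset (Fin d)) (a : (Fin d → ℕ) → ℝ)
    (g : ({j // j ∈ S} → ℝ) → ℝ) :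
    sIntegral (jd n S a).toSignedMeasure g = ∑ p ∈ FS n S, a p * g (pt n S p) := by
  unfold sIntegral
  rw [JordanDecomposition.toJordanDecomposition_toSignedMeasure]
  simp only [jd, posM_integral]
  rw [← Finset.sum_sub_distrib]
  refine Finset.sum_congr rfl fun p _ => ?_
  rw [← sub_mul]
  congr 1
  rcases le_total 0 (a p) with h | h
  · rw [max_eq_left h, max_eq_right (by linarith)]; ring
  · rw [max_eq_right h, max_eq_left (by linarith)]; ring

noncomputable def repM (n : Fin d → ℕ) (θ : (Fin d → ℕ) → ℝ) : MarsRep d where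
  a0 := θ 0
  ν S := (jd n S (fun p => wt n p * cf θ p)).toSignedMeasure
  conc S := by
    rw [jd_tv]
    refine Finset.sum_eq_zero fun p hp => ?_
    rw [Set.indicator_of_notMem, mul_zero]
    exact fun h => h (pt_mem n S p hp)

lemma wt_GG (n : Fin d → ℕ) (S : Finset (Fin d)) (p i : Fin d → ℕ) (hp : p ∈ FS n S) :
    wt n p * GG S (lat n i) (pt n S p) = ∏ k, bas (p k) (i k) := by
  obtain ⟨hp1, hp2⟩ := Finset.mem_filter.1 hp
  unfold wt GG
  rw [← prod_sub S, ← Finset.prod_mul_distrib]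
  refine Finset.prod_congr rfl fun k _ => ?_
  have h1 := spt_iff hp2 k
  have h := mem_I0.1 hp1 k
  have hpos : (0 : ℝ) < n k := by exact_mod_cast (by omega : 0 < n k)
  by_cases hk : k ∈ S
  · have h2 := h1.1 hk
    obtain ⟨m, hm⟩ : ∃ m, p k = m + 1 := ⟨p k - 1, by omega⟩
    simp only [hk, h2, dif_pos, if_false, bas, lat, pt]
    rw [← sub_div, mul_max_of_nonneg _ _ hpos.le, mul_zero, mul_div_cancel₀ _ hpos.ne', hm]
    simp only [Nat.add_sub_cancel, Nat.add_sub_add_right]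
    rcases le_total m (i k) with hl | hl
    · rw [Nat.cast_sub hl, max_eq_left]
      have : (m : ℝ) ≤ i k := by exact_mod_cast hl
      linarith
    · rw [Nat.sub_eq_zero_of_le hl, max_eq_right]
      · simp
      have : (i k : ℝ) ≤ m := by exact_mod_cast hl
      linarith
  · have h2 : p k = 0 := by by_contra h; exact hk (h1.2 h)
    simp [hk, h2, bas]

lemma rep_fun (n : Fin d → ℕ) (hn : ∀ k, 2 ≤ n k) (θ : (Fin d → ℕ) → ℝ) (i : Fin d → ℕ)
    (hi : i ∈ I0 n) : marsFun (repM n θ) (lat n i) = θ i := by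
  rw [← multi_repr n θ i hi, ← Finset.sum_fiberwise (I0 n) spt]
  have h0 : FS n ∅ = {0} := by
    ext p
    simp only [FS, Finset.mem_filter, Finset.mem_singleton, mem_I0]
    constructor
    · rintro ⟨_, h⟩
      funext k
      have := spt_iff h k
      simpa using this
    · rintro rfl
      exact ⟨fun k => by have := hn k; simp; omega, by simp [spt]⟩
  have e : ∀ S : Finset (Fin d), ∑ p ∈ (I0 n).filter (fun p => spt p = S),
      (∏ k, bas (p k) (i k)) * cf θ p =
      (if S = ∅ then θ 0 else 0) + if S.Nonempty then
        sIntegral ((repM n θ).ν S) (GG S (lat n i)) else 0 := by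
    intro S
    by_cases hS : S = ∅
    · subst hS
      change ∑ p ∈ FS n ∅, _ = _
      rw [h0]
      simp [bas, cf_eq, dset, kd]
      congr
    · rw [if_neg hS, if_pos (Finset.nonempty_iff_ne_empty.2 hS), zero_add]
      change _ = sIntegral (jd n S _).toSignedMeasure _
      rw [jd_sInt]
      refine Finset.sum_congr rfl fun p hp => ?_
      rw [← wt_GG n S p i hp]; ring
  rw [Finset.sum_congr rfl (fun S _ => e S), Finset.sum_add_distrib]
  simp only [Finset.sum_ite_eq', Finset.mem_univ, if_true]
  rfl

lemma rep_var (n : Fin d → ℕ) (hn : ∀ k, 2 ≤ n k) (θ : (Fin d → ℕ) → ℝ) :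
    marsVar (repM n θ) ≤ ENNReal.ofReal (V2 d n θ) := by
  rw [V2_eq n hn, ENNReal.ofReal_sum_of_nonneg
    (fun p _ => mul_nonneg (wt_nonneg _ _) (abs_nonneg _)),
    ← Finset.sum_fiberwise (P2 n) spt]
  unfold marsVar
  refine Finset.sum_le_sum fun S _ => ?_
  split_ifs with hS
  swap
  · simp
  change (jd n S _).toSignedMeasure.totalVariation _ ≤ _
  rw [jd_tv]
  have hsub : (P2 n).filter (fun p => spt p = S) ⊆ FS n S := by
    intro p
    simp only [P2, FS, Finset.mem_filter]
    tauto
  rw [← Finset.sum_subset hsub]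
  · refine Finset.sum_le_sum fun p _ => ?_
    rw [abs_mul, abs_of_nonneg (wt_nonneg _ _)]
    refine mul_le_of_le_one_right (by simp) ?_
    exact Set.indicator_le_self' (by simp) _
  · intro p hp hp'
    rw [Set.indicator_of_notMem, mul_zero]
    rintro ⟨_, h⟩
    apply h
    obtain ⟨hp1, hp2⟩ := Finset.mem_filter.1 hp
    funext j
    have : ¬ 2 ≤ p j.1 := fun h2 => hp' (by simp only [P2, Finset.mem_filter]; exact ⟨⟨hp1, _, h2⟩, hp2⟩)
    have : p j.1 - 1 = 0 := by omega
    simp [pt, this]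
end Bwd

/-- On the equally spaced lattice design, the set of design-point
value vectors of MARS representations with variation at most `V` is exactly
`C(V) = {θ : V₂(θ) ≤ V}`. -/
theorem statement11 (d : ℕ) (hd : 1 ≤ d) (n : Fin d → ℕ) (hn : ∀ k, 2 ≤ n k)
    (V : ℝ) (hV : 0 < V) :
    {θ : (∀ k : Fin d, Fin (n k)) → ℝ |
        ∃ R : MarsRep d, marsVar R ≤ ENNReal.ofReal V ∧
          ∀ i : ∀ k : Fin d, Fin (n k),
            θ i = marsFun R fun k => ((i k : ℕ) : ℝ) / (n k : ℝ)} =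
      {θ : (∀ k : Fin d, Fin (n k)) → ℝ | V2 d n (latExtend d n θ) ≤ V} := by
  ext θ
  simp only [Set.mem_setOf_eq]
  have hlat : ∀ i : ∀ k : Fin d, Fin (n k), latExtend d n θ (fun k => (i k : ℕ)) = θ i := by
    intro i
    simp [latExtend]
  constructor
  · rintro ⟨R, hR, hf⟩
    refine (forward n hn R _ ?_).trans (ENNReal.toReal_le_of_le_ofReal hV.le hR)
    intro i hi
    have := hf (fun k => ⟨i k, mem_I0.1 hi k⟩)
    rw [← hlat] at this
    exact this
  · intro h
    refine ⟨repM n (latExtend d n θ), (rep_var n hn _).trans (ENNReal.ofReal_le_ofReal h), ?_⟩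
    intro i
    rw [← hlat]
    exact (rep_fun n hn _ (fun k => (i k : ℕ)) (mem_I0.2 fun k => (i k).2)).symm
end

section
/- Let m ≥ 1 and let g : ℝ^m → ℝ be a C^∞ function. Then the restriction of g to [0,1]^m has finite Hardy–Krause variation anchored at 0, and V_HK0(g) = Σ_{∅≠T⊆{1,…,m}} ∫_{[0,1]^T} |g^(1_T)(t̃)| dt, where for t ∈ [0,1]^T the point t̃ ∈ ℝ^m agrees with t on the coordinates in T and is 0 on the coordinates outside T, and the integral is with respect to Lebesgue measure on ℝ^T. -/
open Finset MeasureTheory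
open scoped ENNReal

/-- The quasi-volume `Δ(g; [u,v])` of `g` on the axis-aligned rectangle `[u,v]`. -/
noncomputable def qvol {ι : Type*} [Fintype ι] [DecidableEq ι]
    (g : (ι → ℝ) → ℝ) (u v : ι → ℝ) : ℝ :=
  ∑ δ : ι → Bool,
    (-1 : ℝ) ^ (Finset.univ.filter fun k => δ k = true).card *
      g fun k => if δ k then u k else v k

/-- The Vitali variation of `g : [0,1]^ι → ℝ`: the supremum over all axis-aligned grid
splits of `[0,1]^ι` of the sum of the absolute quasi-volumes of the cells. -/
noncomputable def vitali {ι : Type*} [Fintype ι] [DecidableEq ι]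
    (g : (ι → ℝ) → ℝ) : ℝ≥0∞ :=
  ⨆ (N : ι → ℕ) (u : ∀ k, Fin (N k + 1) → ℝ) (_ : ∀ k, StrictMono (u k))
      (_ : ∀ k, u k 0 = 0) (_ : ∀ k, u k (Fin.last (N k)) = 1),
    ∑ l : ∀ k, Fin (N k),
      ENNReal.ofReal
        |qvol g (fun k => u k ((l k).castSucc)) fun k => u k ((l k).succ)|

/-- The Hardy–Krause variation of `g` anchored at `0`: the sum over nonempty `T ⊆ ι`
of the Vitali variations of the faces of `g` (coordinates outside `T` set to `0`). -/
noncomputable def hk0 {ι : Type*} [Fintype ι] [DecidableEq ι]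
    (g : (ι → ℝ) → ℝ) : ℝ≥0∞ :=
  ∑ T : Finset ι,
    if T.Nonempty then
      vitali fun t : {j // j ∈ T} → ℝ =>
        g fun k => if h : k ∈ T then t ⟨k, h⟩ else 0
    else 0

/-- Partial derivative in the `k`-th coordinate direction. -/
noncomputable def pderiv1 {m : ℕ} (k : Fin m) (g : (Fin m → ℝ) → ℝ) :
    (Fin m → ℝ) → ℝ :=
  fun x => fderiv ℝ g x (Pi.single k 1)

/-- The mixed partial derivative `g^(β)` for a multi-index `β ∈ ℕ^m`. -/
noncomputable def pderivMulti {m : ℕ} (β : Fin m → ℕ)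
    (g : (Fin m → ℝ) → ℝ) : (Fin m → ℝ) → ℝ :=
  (List.finRange m).foldr (fun k h => (pderiv1 k)^[β k] h) g

/-- Directional derivative. -/
noncomputable def dird {E : Type*} [NormedAddCommGroup E] [NormedSpace ℝ E] (w : E)
    (g : E → ℝ) : E → ℝ := fun x => fderiv ℝ g x w

lemma dird_contDiff {E : Type*} [NormedAddCommGroup E] [NormedSpace ℝ E] (w : E)
    (g : E → ℝ) (hg : ContDiff ℝ (⊤ : ℕ∞) g) : ContDiff ℝ (⊤ : ℕ∞) (dird w g) := by
  unfold dird
  exact (hg.fderiv_right (m := (⊤ : ℕ∞)) (by exact le_rfl)).clm_apply contDiff_const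

lemma foldr_contDiff {E : Type*} [NormedAddCommGroup E] [NormedSpace ℝ E] (L : List E)
    (g : E → ℝ) (hg : ContDiff ℝ (⊤ : ℕ∞) g) : ContDiff ℝ (⊤ : ℕ∞) (L.foldr dird g) := by
  induction L with
  | nil => exact hg
  | cons a L ih => exact dird_contDiff a _ ih

lemma qvol_succ {n : ℕ} (F : (Fin (n+1) → ℝ) → ℝ) (u v : Fin (n+1) → ℝ) :
    qvol F u v = qvol (fun y : Fin n → ℝ => F (Fin.cons (v 0) y)) (fun i => u i.succ) (fun i => v i.succ)
      - qvol (fun y : Fin n → ℝ => F (Fin.cons (u 0) y)) (fun i => u i.succ) (fun i => v i.succ) := by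
  unfold qvol
  rw [← (Fin.consEquiv (fun _ : Fin (n+1) => Bool)).sum_comp, Fintype.sum_prod_type]
  simp only [Fintype.sum_bool, Fin.consEquiv_apply]
  rw [add_comm, sub_eq_add_neg, ← Finset.sum_neg_distrib]
  have h1 : ∀ (b : Bool) (δ : Fin n → Bool), (fun k : Fin (n+1) => if (Fin.cons b δ : Fin (n+1) → Bool) k then u k else v k)
      = Fin.cons (if b then u 0 else v 0) (fun k => if δ k then u k.succ else v k.succ) := by
    intro b δ
    funext k
    refine Fin.cases ?_ (fun k => ?_) k <;> simp
  have h2 : ∀ (b : Bool) (δ : Fin n → Bool),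
      (Finset.univ.filter fun k => (Fin.cons b δ : Fin (n+1) → Bool) k = true).card
       = (if b then 1 else 0) + (Finset.univ.filter fun k => δ k = true).card := by
    intro b δ
    simp only [Finset.card_filter, Fin.sum_univ_succ, Fin.cons_zero, Fin.cons_succ]
  congr 1
  · refine Finset.sum_congr rfl fun δ _ => ?_
    rw [h1, h2]; simp
  · refine Finset.sum_congr rfl fun δ _ => ?_
    rw [h1, h2]; simp [pow_add]

lemma box_integral_succ {n : ℕ} (φ : (Fin (n+1) → ℝ) → ℝ) (hφ : Continuous φ) (u v : Fin (n+1) → ℝ) :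
    ∫ t in Set.univ.pi fun i => Set.Ioc (u i) (v i), φ t =
      ∫ y in Set.univ.pi fun i : Fin n => Set.Ioc (u i.succ) (v i.succ),
        ∫ s in Set.Ioc (u 0) (v 0), φ (Fin.cons s y) := by
  have hp := (volume_preserving_piFinSuccAbove (fun _ : Fin (n+1) => ℝ) 0).symm
  rw [← hp.setIntegral_preimage_emb (MeasurableEquiv.measurableEmbedding _)]
  have hs : ((MeasurableEquiv.piFinSuccAbove (fun _ : Fin (n+1) => ℝ) 0).symm ⁻¹'
      (Set.univ.pi fun i => Set.Ioc (u i) (v i))) =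
      (Set.Ioc (u 0) (v 0)) ×ˢ (Set.univ.pi fun i : Fin n => Set.Ioc (u i.succ) (v i.succ)) := by
    ext ⟨s, y⟩
    simp [MeasurableEquiv.piFinSuccAbove, Set.mem_pi, Fin.forall_fin_succ]
  have hc : Continuous (fun z : ℝ × (Fin n → ℝ) => φ (Fin.cons z.1 z.2)) := by
    apply hφ.comp
    refine continuous_pi fun i => ?_
    refine Fin.cases ?_ (fun k => ?_) i
    · simpa using continuous_fst
    · simp only [Fin.cons_succ]; fun_prop
  rw [hs, Measure.volume_eq_prod, ← Measure.prod_restrict, integral_prod_symm]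
  · simp [MeasurableEquiv.piFinSuccAbove]
    rfl
  · rw [Measure.prod_restrict, ← Measure.volume_eq_prod]
    have : IntegrableOn (fun z : ℝ × (Fin n → ℝ) => φ (Fin.cons z.1 z.2))
      (Set.Icc (u 0, fun i : Fin n => u i.succ) (v 0, fun i : Fin n => v i.succ)) volume := hc.integrableOn_Icc
    have h2 := this.mono_set (s := (Set.Ioc (u 0) (v 0)) ×ˢ (Set.univ.pi fun i : Fin n => Set.Ioc (u i.succ) (v i.succ))) (by
      rintro ⟨s, y⟩ ⟨h1, h2⟩
      simp only [Set.mem_pi] at h2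
      exact ⟨⟨h1.1.le, fun i => (h2 i trivial).1.le⟩, ⟨h1.2, fun i => (h2 i trivial).2⟩⟩)
    have hfun : (fun z => φ ((MeasurableEquiv.piFinSuccAbove (fun _ : Fin (n+1) => ℝ) 0).symm z)) =
        fun z : ℝ × (Fin n → ℝ) => φ (Fin.cons z.1 z.2) := by
      funext z
      simp [MeasurableEquiv.piFinSuccAbove]
      rfl
    rw [hfun]
    exact h2

lemma qvol_eq_integral {E : Type*} [NormedAddCommGroup E] [NormedSpace ℝ E] 
    (g : E → ℝ) (hg : ContDiff ℝ (⊤ : ℕ∞) g) {n : ℕ} (w : Fin n → E) (x : E) (u v : Fin n → ℝ)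
    (huv : ∀ i, u i ≤ v i) :
    qvol (fun t : Fin n → ℝ => g (x + ∑ i, t i • w i)) u v =
      ∫ t in Set.univ.pi fun i => Set.Ioc (u i) (v i),
        ((List.ofFn w).foldr dird g) (x + ∑ i, t i • w i) := by
  induction n generalizing x with
  | zero => 
    simp [qvol, Measure.real, Real.volume_pi_Ioc]
  | succ n ih =>
    rw [qvol_succ]
    simp only [Fin.sum_univ_succ, Fin.cons_zero, Fin.cons_succ, ← add_assoc]
    rw [ih _ _ _ _ (fun i => huv _), ih _ _ _ _ (fun i => huv _)]
    have hH := foldr_contDiff (List.ofFn fun i => w i.succ) g hg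
    rw [List.ofFn_succ, List.foldr_cons]
    set H := (List.ofFn fun i => w i.succ).foldr dird g with hHdef
    have hD := (dird_contDiff (w 0) H hH).continuous
    have hI : ∀ c : E, IntegrableOn (fun t : Fin n → ℝ => H (c + ∑ i, t i • w i.succ))
      (Set.univ.pi fun i => Set.Ioc (u i.succ) (v i.succ)) := by
      intro c
      have h1 : Continuous (fun t : Fin n → ℝ => H (c + ∑ i, t i • w i.succ)) := 
        hH.continuous.comp (by fun_prop)
      refine (h1.integrableOn_Icc (a := fun i => u i.succ) (b := fun i => v i.succ)).mono_set ?_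
      intro y h2
      simp only [Set.mem_pi] at h2
      exact ⟨fun i => (h2 i trivial).1.le, fun i => (h2 i trivial).2⟩
    rw [← integral_sub (hI _) (hI _), box_integral_succ _ (by exact hD.comp (by fun_prop))]
    congr 1
    funext y
    simp only [Fin.cons_zero, Fin.cons_succ]
    rw [← intervalIntegral.integral_of_le (huv 0)]
    symm
    apply intervalIntegral.integral_eq_sub_of_hasDerivAt (f := fun s => H (x + s • w 0 + ∑ i, y i • w i.succ))
    · intro s _
      have h1 : HasDerivAt (fun s : ℝ => x + s • w 0 + ∑ i, y i • w i.succ) (w 0) s := by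
        have := (((hasDerivAt_id s).smul_const (w 0)).const_add x).add_const (∑ i, y i • w i.succ)
        simpa using this
      have h2 := ((hH.differentiable (by simp)) (x + s • w 0 + ∑ i, y i • w i.succ)).hasFDerivAt
      exact h2.comp_hasDerivAt s h1
    · apply Continuous.intervalIntegrable
      exact hD.comp (by fun_prop)

/-- Half-open box. -/
def obox {ι : Type*} (u v : ι → ℝ) : Set (ι → ℝ) := Set.univ.pi fun i => Set.Ioc (u i) (v i)

lemma obox_meas {ι : Type*} [Fintype ι] (u v : ι → ℝ) : MeasurableSet (obox u v) :=
  MeasurableSet.univ_pi fun _ => measurableSet_Ioc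

lemma obox_sub {ι : Type*} (u v : ι → ℝ) : obox u v ⊆ Set.Icc u v := fun y h2 => by
  simp only [obox, Set.mem_pi] at h2
  exact ⟨fun i => (h2 i trivial).1.le, fun i => (h2 i trivial).2⟩

lemma cells_disjoint {ι : Type*} (N : ι → ℕ) (u : ∀ k, Fin (N k + 1) → ℝ)
    (hu : ∀ k, StrictMono (u k)) :
    Pairwise (Function.onFun Disjoint (fun l : ∀ k, Fin (N k) =>
      obox (fun k => u k ((l k).castSucc)) fun k => u k ((l k).succ))) := by
  intro l l' hll
  obtain ⟨k, hk⟩ := Function.ne_iff.1 hll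
  rw [Function.onFun, Set.disjoint_left]
  intro x hx hx'
  have h1 := hx k trivial
  have h2 := hx' k trivial
  simp only [Set.mem_Ioc] at h1 h2
  have h3 := (hu k).lt_iff_lt.1 (h1.1.trans_le h2.2)
  have h4 := (hu k).lt_iff_lt.1 (h2.1.trans_le h1.2)
  apply hk
  ext
  simp only [Fin.lt_def, Fin.val_castSucc, Fin.val_succ] at h3 h4
  omega

lemma cells_lintegral {ι : Type*} [Fintype ι] [DecidableEq ι] (N : ι → ℕ) (u : ∀ k, Fin (N k + 1) → ℝ)
    (hu : ∀ k, StrictMono (u k)) (f : (ι → ℝ) → ℝ≥0∞) :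
    ∑ l : ∀ k, Fin (N k), ∫⁻ t in obox (fun k => u k ((l k).castSucc)) fun k => u k ((l k).succ), f t
     = ∫⁻ t in ⋃ l : ∀ k, Fin (N k), obox (fun k => u k ((l k).castSucc)) fun k => u k ((l k).succ), f t := by
  rw [lintegral_iUnion (fun l => obox_meas _ _) (cells_disjoint N u hu), tsum_fintype]

lemma vitali_le {ι : Type*} [Fintype ι] [DecidableEq ι] (f h : (ι → ℝ) → ℝ)
    (hf : ∀ u v : ι → ℝ, (∀ i, u i ≤ v i) → qvol f u v = ∫ t in obox u v, h t) :
    vitali f ≤ ∫⁻ t in obox (fun _ : ι => (0 : ℝ)) (fun _ => 1), ‖h t‖ₑ := by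
  unfold vitali
  refine iSup_le fun N => iSup_le fun u => iSup_le fun hu => iSup_le fun h0 => iSup_le fun h1 => ?_
  calc _ ≤ ∑ l : ∀ k, Fin (N k), ∫⁻ t in obox (fun k => u k ((l k).castSucc)) fun k => u k ((l k).succ), ‖h t‖ₑ := by
        refine Finset.sum_le_sum fun l _ => ?_
        rw [hf _ _ (fun i => ((hu i) (Fin.castSucc_lt_succ)).le), ← Real.norm_eq_abs, ofReal_norm]
        exact enorm_integral_le_lintegral_enorm _
    _ = _ := cells_lintegral N u hu _
    _ ≤ _ := by
        refine lintegral_mono_set (Set.iUnion_subset fun l => ?_)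
        intro x hx k _
        have := hx k trivial
        simp only [Set.mem_Ioc] at this ⊢
        constructor
        · refine lt_of_le_of_lt ?_ this.1
          rw [← h0 k]; exact (hu k).monotone (Fin.zero_le _)
        · refine this.2.trans ?_
          rw [← h1 k]; exact (hu k).monotone (Fin.le_last _)

lemma cell_bound {ι : Type*} [Fintype ι] (h : (ι → ℝ) → ℝ) (hc : Continuous h) (u v c : ι → ℝ) (ε : ℝ)
    (hε : 0 ≤ ε)
    (hd : ∀ t ∈ obox u v, |h t - h c| ≤ ε) :
    ∫⁻ t in obox u v, ‖h t‖ₑ ≤ ENNReal.ofReal |∫ t in obox u v, h t| + ENNReal.ofReal (2 * ε) * volume (obox u v) := by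
  have hfin : volume (obox u v) ≠ ⊤ := by
    rw [obox, Real.volume_pi_Ioc]
    exact ENNReal.prod_ne_top fun i _ => ENNReal.ofReal_ne_top
  have hI : IntegrableOn h (obox u v) := (hc.integrableOn_Icc (a := u) (b := v)).mono_set (obox_sub u v)
  set V := (volume (obox u v)).toReal with hV
  have e1 : ∫⁻ t in obox u v, ‖h t‖ₑ = ENNReal.ofReal (∫ t in obox u v, |h t|) := by
    rw [ofReal_integral_eq_lintegral_ofReal hI.abs (Filter.Eventually.of_forall fun _ => abs_nonneg _)]
    congr 1; funext t; rw [← Real.norm_eq_abs, ofReal_norm]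
  rw [e1, ← ENNReal.ofReal_toReal hfin, ← hV, ← ENNReal.ofReal_mul (by positivity),
    ← ENNReal.ofReal_add (abs_nonneg _) (by positivity)]
  apply ENNReal.ofReal_le_ofReal
  have hcI : ∀ a : ℝ, IntegrableOn (fun _ : ι → ℝ => a) (obox u v) := fun a =>
    integrableOn_const hfin
  have hci : ∀ a : ℝ, ∫ t in obox u v, a = V * a := fun a => by
    rw [setIntegral_const, smul_eq_mul]; rfl
  have e2 : ∫ t in obox u v, |h t| ≤ ∫ t in obox u v, (|h c| + ε) := by
    refine setIntegral_mono_on hI.abs (hcI _) (obox_meas u v) fun t ht => ?_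
    have := hd t ht
    have := abs_sub_abs_le_abs_sub (h t) (h c)
    linarith
  have e3 : |∫ t in obox u v, (h t - h c)| ≤ V * ε := by
    rw [← Real.norm_eq_abs, ← hci]
    refine (norm_integral_le_integral_norm _).trans ?_
    refine setIntegral_mono_on (hI.sub (hcI _)).norm (hcI _) (obox_meas u v) fun t ht => hd t ht
  rw [integral_sub hI (hcI _), hci] at e3
  rw [hci] at e2
  have hVn : 0 ≤ V := ENNReal.toReal_nonneg
  have e4 : V * |h c| = |V * h c| := by rw [abs_mul, abs_of_nonneg hVn]
  have e5 := abs_sub_abs_le_abs_sub (V * h c) (∫ t in obox u v, h t)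
  rw [abs_sub_comm] at e5
  nlinarith

lemma le_vitali {ι : Type*} [Fintype ι] [DecidableEq ι] (f h : (ι → ℝ) → ℝ) (hc : Continuous h)
    (hf : ∀ u v : ι → ℝ, (∀ i, u i ≤ v i) → qvol f u v = ∫ t in obox u v, h t) :
    ∫⁻ t in obox (fun _ : ι => (0 : ℝ)) (fun _ => 1), ‖h t‖ₑ ≤ vitali f := by
  apply ENNReal.le_of_forall_pos_le_add
  intro ε hε _
  have hK : IsCompact (Set.Icc (fun _ : ι => (0:ℝ)) (fun _ => 1)) := isCompact_Icc
  have huc := hK.uniformContinuousOn_of_continuous hc.continuousOn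
  obtain ⟨δ, hδ, hd⟩ := Metric.uniformContinuousOn_iff_le.1 huc (ε / 2) (by positivity)
  obtain ⟨n, hn⟩ := exists_nat_one_div_lt hδ
  set M := n + 1 with hM
  have hMpos : (0 : ℝ) < M := by positivity
  let u : ∀ _ : ι, Fin (M + 1) → ℝ := fun _ j => (j : ℝ) / M
  have hu : ∀ k, StrictMono (u k) := fun k i j hij => by
    simp only [u]
    have : (i : ℝ) < j := by exact_mod_cast hij
    gcongr
  have hu0 : ∀ k, u k 0 = 0 := fun k => by simp [u]
  have hu1 : ∀ k, u k (Fin.last M) = 1 := fun k => by simp [u, hMpos.ne']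
  have hV : ∑ l : ι → Fin M, ENNReal.ofReal
        |qvol f (fun k => u k ((l k).castSucc)) fun k => u k ((l k).succ)| ≤ vitali f := by
    unfold vitali
    exact le_iSup_of_le (fun _ => M) (le_iSup_of_le u (le_iSup_of_le hu (le_iSup_of_le hu0 (le_iSup_of_le hu1 le_rfl))))
  have hsub : ∀ l : ι → Fin M, obox (fun k => u k ((l k).castSucc)) (fun k => u k ((l k).succ)) ⊆
      obox (fun _ : ι => (0 : ℝ)) (fun _ => 1) := by
    intro l x hx k _
    have := hx k trivial
    simp only [Set.mem_Ioc] at this ⊢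
    constructor
    · refine lt_of_le_of_lt ?_ this.1
      rw [← hu0 k]; exact (hu k).monotone (Fin.zero_le _)
    · refine this.2.trans ?_
      rw [← hu1 k]; exact (hu k).monotone (Fin.le_last _)
  have hcov : obox (fun _ : ι => (0 : ℝ)) (fun _ => 1) = 
      ⋃ l : ι → Fin M, obox (fun k => u k ((l k).castSucc)) fun k => u k ((l k).succ) := by
    apply Set.Subset.antisymm _ (Set.iUnion_subset hsub)
    intro x hx
    have key : ∀ k, ∃ j : Fin M, x k ∈ Set.Ioc (u k j.castSucc) (u k j.succ) := by
      intro k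
      have hxk := hx k trivial
      simp only [Set.mem_Ioc] at hxk
      have hp : 0 < M * x k := mul_pos hMpos hxk.1
      have hcp : 0 < ⌈M * x k⌉₊ := Nat.ceil_pos.2 hp
      have hcl : ⌈M * x k⌉₊ ≤ M := Nat.ceil_le.2 (by nlinarith)
      refine ⟨⟨⌈M * x k⌉₊ - 1, by omega⟩, ?_, ?_⟩
      · simp only [u, Fin.castSucc_mk]
        rw [div_lt_iff₀' hMpos]
        have hlt : ⌈M * x k⌉₊ - 1 < ⌈M * x k⌉₊ := Nat.sub_lt hcp one_pos
        exact Nat.lt_ceil.1 hlt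
      · simp only [u, Fin.succ_mk]
        rw [le_div_iff₀ hMpos, mul_comm, Nat.sub_add_cancel hcp]
        exact Nat.le_ceil _
    choose l hl using key
    exact Set.mem_iUnion.2 ⟨l, fun k _ => hl k⟩
  have hvol := cells_lintegral (fun _ : ι => M) u hu (fun _ => 1)
  rw [← hcov] at hvol
  simp only [lintegral_const, one_mul, Measure.restrict_apply, MeasurableSet.univ, Set.univ_inter] at hvol
  have hone : volume (obox (fun _ : ι => (0 : ℝ)) (fun _ => 1)) = 1 := by
    rw [obox, Real.volume_pi_Ioc]; simp
  rw [hone] at hvol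
  calc _ = ∑ l : ι → Fin M, ∫⁻ t in obox (fun k => u k ((l k).castSucc)) fun k => u k ((l k).succ), ‖h t‖ₑ := by
        rw [hcov]; exact (cells_lintegral (fun _ : ι => M) u hu _).symm
    _ ≤ ∑ l : ι → Fin M, (ENNReal.ofReal
        |qvol f (fun k => u k ((l k).castSucc)) fun k => u k ((l k).succ)| + 
        ENNReal.ofReal (2 * (ε / 2)) * volume (obox (fun k => u k ((l k).castSucc)) fun k => u k ((l k).succ))) := by
        refine Finset.sum_le_sum fun l _ => ?_
        have hle : ∀ i, u i ((l i).castSucc) ≤ u i ((l i).succ) := fun i => ((hu i) (Fin.castSucc_lt_succ)).le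
        rw [hf _ _ hle]
        refine cell_bound h hc _ _ (fun k => u k ((l k).succ)) _ (by positivity) ?_
        intro t ht
        have hcm : (fun k => u k ((l k).succ)) ∈ obox (fun k => u k ((l k).castSucc)) (fun k => u k ((l k).succ)) :=
          fun k _ => ⟨(hu k) (Fin.castSucc_lt_succ), le_rfl⟩
        refine hd t (obox_sub _ _ (hsub l ht)) _ (obox_sub _ _ (hsub l hcm)) ?_
        rw [dist_pi_le_iff hδ.le]
        intro k
        have h1 := ht k trivial
        simp only [Set.mem_Ioc] at h1
        rw [Real.dist_eq, abs_sub_comm, abs_of_nonneg (by linarith)]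
        have h2 : u k ((l k).succ) - u k ((l k).castSucc) = 1 / ((n : ℝ) + 1) := by
          simp only [u, Fin.val_succ, Fin.val_castSucc, hM]
          push_cast
          field_simp
          ring
        linarith
    _ = (∑ l : ι → Fin M, ENNReal.ofReal
        |qvol f (fun k => u k ((l k).castSucc)) fun k => u k ((l k).succ)|) + ε := by
        rw [Finset.sum_add_distrib, ← Finset.mul_sum, hvol, mul_one]
        congr 1
        rw [mul_div_cancel₀ _ (two_ne_zero), ENNReal.ofReal_coe_nnreal]
    _ ≤ _ := by gcongr

lemma vitali_eq {ι : Type*} [Fintype ι] [DecidableEq ι] (f h : (ι → ℝ) → ℝ) (hc : Continuous h)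
    (hf : ∀ u v : ι → ℝ, (∀ i, u i ≤ v i) → qvol f u v = ∫ t in obox u v, h t) :
    vitali f = ENNReal.ofReal (∫ t in Set.univ.pi fun _ : ι => Set.Icc (0 : ℝ) 1, |h t|) := by
  have hae : obox (fun _ : ι => (0:ℝ)) (fun _ => 1) =ᵐ[volume] Set.Icc (fun _ : ι => (0:ℝ)) (fun _ => 1) :=
    Measure.univ_pi_Ioc_ae_eq_Icc (μ := fun _ : ι => (volume : Measure ℝ))
  rw [le_antisymm (vitali_le f h hf) (le_vitali f h hc hf), Set.pi_univ_Icc,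
    ← setIntegral_congr_set hae,
    ofReal_integral_eq_lintegral_ofReal]
  · simp only [← Real.norm_eq_abs, ofReal_norm]
  · exact (hc.abs.integrableOn_Icc (a := fun _ : ι => (0:ℝ)) (b := fun _ => 1)).mono_set (obox_sub _ _)
  · exact Filter.Eventually.of_forall fun _ => abs_nonneg _

lemma qvol_reindex {ι κ : Type*} [Fintype ι] [DecidableEq ι] [Fintype κ] [DecidableEq κ] (e : κ ≃ ι)
    (f : (ι → ℝ) → ℝ) (u v : ι → ℝ) :
    qvol f u v = qvol (fun t : κ → ℝ => f (fun i => t (e.symm i))) (fun k => u (e k)) (fun k => v (e k)) := by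
  unfold qvol
  rw [← (e.arrowCongr (Equiv.refl Bool)).sum_comp]
  refine Finset.sum_congr rfl fun δ _ => ?_
  congr 2
  · apply Finset.card_bij (fun i _ => e.symm i)
    · intro a; simp
    · intro a _ b _; simp
    · intro b hb; exact ⟨e b, by simpa using hb, by simp⟩
  · funext i; simp

lemma integral_reindex {ι κ : Type*} [Fintype ι] [Fintype κ] (e : κ ≃ ι)
    (h : (ι → ℝ) → ℝ) (u v : ι → ℝ) :
    ∫ t in obox u v, h t = ∫ t in obox (fun k => u (e k)) (fun k => v (e k)), h (fun i => t (e.symm i)) := by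
  have hp := volume_measurePreserving_piCongrLeft (fun _ : ι => ℝ) e
  have happ : ∀ t : κ → ℝ, MeasurableEquiv.piCongrLeft (fun _ : ι => ℝ) e t = fun i => t (e.symm i) := by
    intro t; funext i
    obtain ⟨k, rfl⟩ := e.surjective i
    rw [MeasurableEquiv.coe_piCongrLeft, Equiv.piCongrLeft_apply_apply]; simp
  rw [← hp.setIntegral_preimage_emb (MeasurableEquiv.measurableEmbedding _)]
  simp only [happ]
  congr 2
  ext t
  simp only [Set.mem_preimage, happ, obox, Set.mem_pi, Set.mem_univ, true_imp_iff]
  rw [← e.forall_congr_right]; simp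

lemma face_qvol {m : ℕ} (g : (Fin m → ℝ) → ℝ) (hg : ContDiff ℝ (⊤ : ℕ∞) g) (T : Finset (Fin m)) :
    (Continuous (fun t : {j // j ∈ T} → ℝ => pderivMulti (fun k => if k ∈ T then 1 else 0) g
                fun k => if h : k ∈ T then t ⟨k, h⟩ else 0)) ∧
    ∀ u v : {j // j ∈ T} → ℝ, (∀ i, u i ≤ v i) →
      qvol (fun t : {j // j ∈ T} → ℝ => g fun k => if h : k ∈ T then t ⟨k, h⟩ else 0) u v =
      ∫ t in obox u v, pderivMulti (fun k => if k ∈ T then 1 else 0) g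
                fun k => if h : k ∈ T then t ⟨k, h⟩ else 0 := by
  classical
  set L := (List.finRange m).filter (fun k => decide (k ∈ T)) with hL
  have hnd : L.Nodup := (List.nodup_finRange m).filter _
  have hmem : ∀ k, k ∈ L ↔ k ∈ T := fun k => by simp [hL]
  let e : Fin L.length ≃ {j // j ∈ T} :=
    (hnd.getEquiv L).trans (Equiv.subtypeEquivRight hmem)
  have he : ∀ i, ((e i : {j // j ∈ T}) : Fin m) = L.get i := fun i => rfl
  let w : Fin L.length → (Fin m → ℝ) := fun i => Pi.single (L.get i) 1
  have hder : pderivMulti (fun k => if k ∈ T then 1 else 0) g = (List.ofFn w).foldr dird g := by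
    have h1 : List.ofFn w = L.map (fun k => (Pi.single k 1 : Fin m → ℝ)) := by
      conv_rhs => rw [← List.ofFn_get L, List.map_ofFn]
      rfl
    rw [h1, List.foldr_map, hL, List.foldr_filter, pderivMulti]
    congr 1
    funext k f
    by_cases hk : k ∈ T
    · simp [hk]; rfl
    · simp [hk]
  have hlin : ∀ t : Fin L.length → ℝ, (fun k => if h : k ∈ T then t (e.symm ⟨k, h⟩) else 0) =
      (0 : Fin m → ℝ) + ∑ i, t i • w i := by
    intro t
    funext k
    simp only [zero_add, Finset.sum_apply, Pi.smul_apply, smul_eq_mul, w, Pi.single_apply]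
    by_cases hk : k ∈ T
    · rw [dif_pos hk, Finset.sum_eq_single (e.symm ⟨k, hk⟩)]
      · rw [← he]; simp
      · intro b _ hb
        rw [if_neg, mul_zero]
        intro hkb
        apply hb
        rw [Equiv.eq_symm_apply]
        exact Subtype.ext ((he b).trans hkb.symm)
      · simp
    · rw [dif_neg hk, Finset.sum_eq_zero]
      intro i _
      rw [if_neg, mul_zero]
      rintro rfl
      exact hk ((hmem _).1 (List.get_mem _ _))
  rw [hder]
  constructor
  · refine (foldr_contDiff _ g hg).continuous.comp (continuous_pi fun k => ?_)
    by_cases hk : k ∈ T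
    · simp only [hk, dif_pos]; fun_prop
    · simp only [hk, dif_neg, not_false_eq_true]; fun_prop
  · intro u v huv
    rw [qvol_reindex e, integral_reindex e]
    simp only [hlin]
    exact qvol_eq_integral g hg w 0 _ _ (fun i => huv _)

/-- For a `C^∞` function `g`, the restriction of `g` to `[0,1]^m` has
finite Hardy–Krause variation anchored at `0`, and
`V_HK0(g) = Σ_{∅≠T} ∫_{[0,1]^T} |g^{(1_T)}(t̃)| dt`. -/
theorem statement14 (m : ℕ) (hm : 1 ≤ m) (g : (Fin m → ℝ) → ℝ)
    (hg : ContDiff ℝ (⊤ : ℕ∞) g) :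
    hk0 g ≠ ⊤ ∧
      hk0 g = ∑ T : Finset (Fin m),
        if T.Nonempty then
          ENNReal.ofReal
            (∫ t in Set.univ.pi fun _ : {j // j ∈ T} => Set.Icc (0 : ℝ) 1,
              |pderivMulti (fun k => if k ∈ T then 1 else 0) g
                fun k => if h : k ∈ T then t ⟨k, h⟩ else 0|)
        else 0 := by
  have key : hk0 g = ∑ T : Finset (Fin m),
        if T.Nonempty then
          ENNReal.ofReal
            (∫ t in Set.univ.pi fun _ : {j // j ∈ T} => Set.Icc (0 : ℝ) 1,
              |pderivMulti (fun k => if k ∈ T then 1 else 0) g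
                fun k => if h : k ∈ T then t ⟨k, h⟩ else 0|)
        else 0 := by
    unfold hk0
    refine Finset.sum_congr rfl fun T _ => ?_
    obtain ⟨hc, hf⟩ := face_qvol g hg T
    rw [vitali_eq _ _ hc hf]
  refine ⟨?_, key⟩
  rw [key]
  refine ENNReal.sum_ne_top.2 fun T _ => ?_
  split_ifs
  · exact ENNReal.ofReal_ne_top
  · exact ENNReal.zero_ne_top
end
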